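/- arXiv:math/9605212 — 3 statements merged into one kernel-verified Lean document; each statement's English description precedes it below -/
import Mathlib

section
/- Let n ≥ 1 and let q > -1 be a real number that is not an even integer. Then for every even Schwartz function φ on ℝⁿ whose support does not contain the origin and every fixed nonzero vector ξ ∈ ℝⁿ, one has ∫_{ℝⁿ} |(x,ξ)|^q φ̂(x) dx = (2π)^{n-1} C_q ∫_ℝ |t|^{-1-q} φ(tξ) dt. -/
open MeasureTheory Metric
open scoped Real RealInnerProductSpace

noncomputable section

/-- The constant `C_q = 2^{q+1} √π Γ((q+1)/2) / Γ(-q/2)`, the constant with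
`(|z|^q)^∧(t) = C_q |t|^{-1-q}` on `ℝ`. -/
def Cq (q : ℝ) : ℝ :=
  (2 : ℝ) ^ (q + 1) * Real.sqrt π * Real.Gamma ((q + 1) / 2) / Real.Gamma (-q / 2)

/-- The (non-unitary) Fourier transform `φ̂(ξ) = ∫_{ℝⁿ} φ(x) e^{-i(x,ξ)} dx`. -/
def ftNU {n : ℕ} (φ : EuclideanSpace ℝ (Fin n) → ℂ) (ξ : EuclideanSpace ℝ (Fin n)) : ℂ :=
  ∫ x, Complex.exp (-Complex.I * (⟪x, ξ⟫ : ℂ)) * φ x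

open Set Filter Topology in
lemma integrableOn_Ioi_of_bounds {f : ℝ → ℝ} (hf : ContinuousOn f (Ioi 0)) {C α β : ℝ}
    (hα : -1 < α) (hβ : β < -1) (h0 : ∀ s, 0 < s → s ≤ 1 → |f s| ≤ C * s ^ α)
    (h1 : ∀ s, 1 < s → |f s| ≤ C * s ^ β) : IntegrableOn f (Ioi 0) := by
  rw [← Ioc_union_Ioi_eq_Ioi (zero_le_one (α := ℝ)), integrableOn_union]
  constructor
  · have : IntegrableOn (fun s : ℝ => C * s ^ α) (Ioc 0 1) := by
      apply Integrable.const_mul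
      exact (intervalIntegrable_iff_integrableOn_Ioc_of_le zero_le_one).1
        (intervalIntegral.intervalIntegrable_rpow' hα)
    refine Integrable.mono' this
      ((hf.mono (fun x hx => hx.1)).aestronglyMeasurable measurableSet_Ioc) ?_
    filter_upwards [ae_restrict_mem measurableSet_Ioc] with s hs
    exact h0 s hs.1 hs.2
  · have : IntegrableOn (fun s : ℝ => C * s ^ β) (Ioi 1) :=
      (integrableOn_Ioi_rpow_of_lt hβ one_pos).const_mul C
    refine Integrable.mono' this
      ((hf.mono (Ioi_subset_Ioi zero_le_one)).aestronglyMeasurable measurableSet_Ioi) ?_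
    filter_upwards [ae_restrict_mem measurableSet_Ioi] with s hs
    exact h1 s hs

/-- Remainder of the exponential series. -/
def expRem (k : ℕ) (u : ℝ) : ℝ :=
  Real.exp (-u) - ∑ i ∈ Finset.range k, (-u) ^ i / (i.factorial : ℝ)

lemma continuous_expRem (k : ℕ) : Continuous (expRem k) := by
  unfold expRem; fun_prop

lemma expRem_succ (k : ℕ) (u : ℝ) :
    expRem (k + 1) u = expRem k u - (-u) ^ k / (k.factorial : ℝ) := by
  simp [expRem, Finset.sum_range_succ]; ring

lemma hasDerivAt_expRem (k : ℕ) (u : ℝ) :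
    HasDerivAt (expRem (k + 1)) (-(expRem k u)) u := by
  induction k with
  | zero =>
    have : HasDerivAt (fun u : ℝ => Real.exp (-u) - 1) (Real.exp (-u) * (-1)) u :=
      ((hasDerivAt_neg u).exp).sub_const 1
    convert! this using 1
    · ext; simp [expRem]
    · simp [expRem]
  | succ k ih =>
    have h2 : HasDerivAt (fun u : ℝ => (-u) ^ (k + 1) / ((k + 1).factorial : ℝ))
        (((k + 1 : ℕ) : ℝ) * (-u) ^ k * (-1) / ((k + 1).factorial : ℝ)) u := by
      simpa using ((hasDerivAt_neg u).pow (k + 1)).div_const ((k + 1).factorial : ℝ)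
    convert! ih.sub h2 using 1
    · ext x; exact expRem_succ (k + 1) x
    · rw [expRem_succ, Nat.factorial_succ]
      push_cast
      have : (k.factorial : ℝ) ≠ 0 := by positivity
      have : (k : ℝ) + 1 ≠ 0 := by positivity
      field_simp
      ring

lemma abs_expRem_le (k : ℕ) : ∀ u : ℝ, 0 ≤ u → |expRem k u| ≤ u ^ k := by
  induction k with
  | zero => intro u hu; simp [expRem, hu]
  | succ k ih =>
    intro u hu
    have h := (convex_Icc (0 : ℝ) u).norm_image_sub_le_of_norm_hasDerivWithin_le
      (f := expRem (k + 1)) (f' := fun x => -(expRem k x)) (C := u ^ k)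
      (fun x _ => (hasDerivAt_expRem k x).hasDerivWithinAt)
      (fun x hx => by
        rw [norm_neg, Real.norm_eq_abs]
        exact (ih x hx.1).trans (pow_le_pow_left₀ hx.1 hx.2 k))
      (Set.left_mem_Icc.2 hu) (Set.right_mem_Icc.2 hu)
    have h0 : expRem (k + 1) 0 = 0 := by
      simp [expRem, Finset.sum_range_succ']
    rw [h0, sub_zero, sub_zero, Real.norm_eq_abs, Real.norm_eq_abs, abs_of_nonneg hu] at h
    rw [pow_succ]; exact h

lemma abs_expRem_succ_le (k : ℕ) (u : ℝ) (hu : 0 ≤ u) : |expRem (k + 1) u| ≤ 2 * u ^ k := by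
  rw [expRem_succ]
  have h1 := abs_expRem_le k u hu
  have h2 : |(-u) ^ k / (k.factorial : ℝ)| ≤ u ^ k := by
    rw [abs_div, abs_pow, abs_neg, abs_of_nonneg hu, abs_of_nonneg (by positivity : (0:ℝ) ≤ k.factorial)]
    apply div_le_self (by positivity)
    exact_mod_cast k.factorial_pos
  have := abs_sub (expRem k u) ((-u) ^ k / (k.factorial : ℝ))
  linarith

lemma integrableOn_expRem (k : ℕ) (a : ℝ) (h1 : (k : ℝ) - 1 < a) (h2 : a < k) :
    IntegrableOn (fun s : ℝ => s ^ (-a - 1) * expRem k s) (Set.Ioi 0) := by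
  cases k with
  | zero =>
    have := Real.GammaIntegral_convergent (s := -a) (by simpa using h2)
    refine this.congr_fun (fun s _ => ?_) measurableSet_Ioi
    simp [expRem, mul_comm]
  | succ k =>
    push_cast at h1 h2
    refine integrableOn_Ioi_of_bounds (C := 2) (α := k - a) (β := k - a - 1) ?_ (by linarith)
      (by linarith) ?_ ?_
    · exact (continuousOn_id.rpow_const (fun x hx => Or.inl (ne_of_gt hx))).mul
        (continuous_expRem _).continuousOn
    · intro s hs _
      rw [abs_mul, abs_of_nonneg (by positivity : (0:ℝ) ≤ s ^ (-a - 1))]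
      have h := abs_expRem_le (k + 1) s hs.le
      calc s ^ (-a - 1) * |expRem (k + 1) s| ≤ s ^ (-a - 1) * s ^ (k + 1) := by gcongr
        _ = s ^ (k - a) := by
          rw [← Real.rpow_natCast s (k + 1), ← Real.rpow_add hs]; congr 1; push_cast; ring
        _ ≤ 2 * s ^ (k - a) := by have : 0 ≤ s ^ (k - a) := by positivity
                                  linarith
    · intro s hs
      have hs : 0 < s := by linarith
      rw [abs_mul, abs_of_nonneg (by positivity : (0:ℝ) ≤ s ^ (-a - 1))]
      have h := abs_expRem_succ_le k s hs.le
      calc s ^ (-a - 1) * |expRem (k + 1) s| ≤ s ^ (-a - 1) * (2 * s ^ k) := by gcongr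
        _ = 2 * (s ^ (-a - 1) * s ^ (k : ℝ)) := by rw [Real.rpow_natCast]; ring
        _ = 2 * s ^ (k - a - 1) := by
          rw [← Real.rpow_add hs]; congr 2; ring

open Set Filter Topology in
lemma integral_expRem (k : ℕ) : ∀ (a : ℝ), (k : ℝ) - 1 < a → a < k →
    ∫ s in Set.Ioi (0:ℝ), s ^ (-a - 1) * expRem k s = Real.Gamma (-a) := by
  induction k with
  | zero =>
    intro a h1 h2
    rw [Real.Gamma_eq_integral (by simpa using h2)]
    refine setIntegral_congr_fun measurableSet_Ioi (fun s _ => ?_)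
    simp [expRem, mul_comm]
  | succ k ih =>
    intro a h1 h2
    have h1' := h1
    have h2' := h2
    push_cast at h1 h2
    have ha : 0 < a := by have : (0:ℝ) ≤ k := by positivity
                          linarith
    have I1 := integrableOn_expRem (k + 1) a h1' h2'
    have I0 := integrableOn_expRem k (a - 1) (by linarith) (by linarith)
    have IH := ih (a - 1) (by linarith) (by linarith)
    have e1 : -(a - 1) - 1 = -a := by ring
    rw [e1] at IH I0
    have key := integral_Ioi_mul_deriv_eq_deriv_mul (a := 0) (u := fun s => expRem (k + 1) s)
      (u' := fun s => -(expRem k s)) (v := fun s => s ^ (-a)) (v' := fun s => (-a) * s ^ (-a - 1))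
      (a' := 0) (b' := 0)
      (fun x _ => hasDerivAt_expRem k x)
      (fun x hx => Real.hasDerivAt_rpow_const (Or.inl (ne_of_gt hx)))
      (by
        refine IntegrableOn.congr_fun (I1.const_mul (-a)) (fun s _ => ?_) measurableSet_Ioi
        simp only [Pi.mul_apply]; ring)
      (by
        refine (I0.neg).congr_fun (fun s _ => ?_) measurableSet_Ioi
        simp only [Pi.mul_apply, Pi.neg_apply]; ring)
      (by
        have hb : Tendsto (fun s : ℝ => s ^ (k + 1 - a)) (𝓝[>] 0) (𝓝 0) := by
          have := (Real.continuousAt_rpow_const 0 (k + 1 - a) (Or.inr (by linarith))).tendsto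
          rw [Real.zero_rpow (by linarith)] at this
          exact this.mono_left nhdsWithin_le_nhds
        refine squeeze_zero_norm' ?_ hb
        filter_upwards [self_mem_nhdsWithin] with s hs
        have hs : 0 < s := hs
        have h := abs_expRem_le (k + 1) s hs.le
        rw [Pi.mul_apply, norm_mul, Real.norm_eq_abs, Real.norm_eq_abs,
          abs_of_nonneg (by positivity : (0:ℝ) ≤ s ^ (-a))]
        calc |expRem (k + 1) s| * s ^ (-a) ≤ s ^ (k + 1) * s ^ (-a) := by gcongr
          _ = s ^ (k + 1 - a) := by
            rw [← Real.rpow_natCast s (k + 1), ← Real.rpow_add hs]; congr 1; push_cast; ring)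
      (by
        have hb : Tendsto (fun s : ℝ => 2 * s ^ (-(a - k))) atTop (𝓝 0) := by
          simpa using (tendsto_rpow_neg_atTop (by linarith : 0 < a - k)).const_mul 2
        refine squeeze_zero_norm' ?_ hb
        filter_upwards [eventually_gt_atTop 0] with s hs
        have h := abs_expRem_succ_le k s hs.le
        rw [Pi.mul_apply, norm_mul, Real.norm_eq_abs, Real.norm_eq_abs,
          abs_of_nonneg (by positivity : (0:ℝ) ≤ s ^ (-a))]
        calc |expRem (k + 1) s| * s ^ (-a) ≤ (2 * s ^ k) * s ^ (-a) := by gcongr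
          _ = 2 * (s ^ (k : ℝ) * s ^ (-a)) := by rw [Real.rpow_natCast]; ring
          _ = 2 * s ^ (-(a - k)) := by
            rw [← Real.rpow_add hs]; congr 2; ring)
    have l1 : ∫ s in Ioi (0:ℝ), expRem (k + 1) s * ((-a) * s ^ (-a - 1))
        = (-a) * ∫ s in Ioi (0:ℝ), s ^ (-a - 1) * expRem (k + 1) s := by
      rw [← integral_const_mul]; congr 1; ext s; ring
    have l2 : ∫ s in Ioi (0:ℝ), -(expRem k s) * s ^ (-a) = - Real.Gamma (-(a - 1)) := by
      rw [← IH, ← integral_neg]; congr 1; ext s; ring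
    rw [l1, l2, show -(a - 1) = -a + 1 by ring, Real.Gamma_add_one (by linarith)] at key
    have : (-a) * ((∫ s in Ioi (0:ℝ), s ^ (-a - 1) * expRem (k + 1) s) - Real.Gamma (-a)) = 0 := by
      linarith
    rcases mul_eq_zero.1 this with h | h
    · linarith
    · linarith

/-- Scaling. -/
lemma integral_scale (f : ℝ → ℝ) (a c : ℝ) (hc : 0 < c) :
    ∫ s in Set.Ioi (0:ℝ), s ^ (-a - 1) * f (s * c)
      = c ^ a * ∫ s in Set.Ioi (0:ℝ), s ^ (-a - 1) * f s := by
  have h := integral_comp_mul_right_Ioi (fun s : ℝ => s ^ (-a - 1) * f s) 0 hc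
  rw [zero_mul] at h
  have h2 : ∫ s in Set.Ioi (0:ℝ), (s * c) ^ (-a - 1) * f (s * c)
      = c ^ (-a - 1) * ∫ s in Set.Ioi (0:ℝ), s ^ (-a - 1) * f (s * c) := by
    rw [← integral_const_mul]
    refine setIntegral_congr_fun measurableSet_Ioi (fun s hs => ?_)
    have hs : 0 < s := hs
    rw [Real.mul_rpow hs.le hc.le]; ring
  rw [h2, smul_eq_mul] at h
  have h3 : c ^ (a + 1) * c ^ (-a - 1) = 1 := by
    rw [← Real.rpow_add hc]; simp
  have h4 : c ^ (a + 1) * c⁻¹ = c ^ a := by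
    rw [Real.rpow_add_one hc.ne']; field_simp
  calc _ = c ^ (a + 1) * (c ^ (-a - 1) * ∫ s in Set.Ioi (0:ℝ), s ^ (-a - 1) * f (s * c)) := by
        rw [← mul_assoc, h3, one_mul]
    _ = _ := by rw [h, ← mul_assoc, h4]

lemma integrableOn_scale (f : ℝ → ℝ) (a c : ℝ) (hc : 0 < c)
    (hf : IntegrableOn (fun s : ℝ => s ^ (-a - 1) * f s) (Set.Ioi 0)) :
    IntegrableOn (fun s : ℝ => s ^ (-a - 1) * f (s * c)) (Set.Ioi 0) := by
  have h := (integrableOn_Ioi_comp_mul_right_iff (fun s : ℝ => s ^ (-a - 1) * f s) 0 hc).2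
    (by simpa using hf)
  refine IntegrableOn.congr_fun (h.const_mul (c ^ (a + 1))) (fun s hs => ?_) measurableSet_Ioi
  have hs : 0 < s := hs
  have h3 : c ^ (a + 1) * c ^ (-a - 1) = 1 := by
    rw [← Real.rpow_add hc]; simp
  rw [Real.mul_rpow hs.le hc.le]
  calc _ = (c ^ (a + 1) * c ^ (-a - 1)) * (s ^ (-a - 1) * f (s * c)) := by ring
    _ = _ := by rw [h3, one_mul]

/-- The inverse Gamma integral. -/
lemma integral_invGamma (p c : ℝ) (hp : 0 < p) (hc : 0 < c) :
    IntegrableOn (fun s : ℝ => s ^ (-p - 1) * Real.exp (-(c / s))) (Set.Ioi 0) ∧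
    ∫ s in Set.Ioi (0:ℝ), s ^ (-p - 1) * Real.exp (-(c / s)) = Real.Gamma p * c ^ (-p) := by
  have hcong : ∀ s ∈ Set.Ioi (0:ℝ),
      (|(-1:ℝ)| * s ^ ((-1:ℝ) - 1)) • (fun y : ℝ => y ^ (p - 1) * Real.exp (-(c * y))) (s ^ (-1:ℝ))
      = s ^ (-p - 1) * Real.exp (-(c / s)) := by
    intro s hs
    have hs : 0 < s := hs
    simp only [smul_eq_mul, abs_neg, abs_one, one_mul]
    rw [← Real.rpow_mul hs.le, ← mul_assoc, ← Real.rpow_add hs, Real.rpow_neg_one]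
    congr 2
    ring
  constructor
  · have hi : IntegrableOn (fun y : ℝ => y ^ (p - 1) * Real.exp (-(c * y))) (Set.Ioi 0) := by
      have := integrableOn_rpow_mul_exp_neg_mul_rpow (p := 1) (s := p - 1) (b := c)
        (by linarith) one_pos hc
      simpa using this
    exact ((integrableOn_Ioi_comp_rpow_iff _ (by norm_num : (-1:ℝ) ≠ 0)).2 hi).congr_fun hcong
      measurableSet_Ioi
  · rw [← setIntegral_congr_fun measurableSet_Ioi hcong,
      integral_comp_rpow_Ioi (fun y : ℝ => y ^ (p - 1) * Real.exp (-(c * y)))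
        (by norm_num : (-1:ℝ) ≠ 0),
      Real.integral_rpow_mul_exp_neg_mul_Ioi hp hc, one_div, Real.inv_rpow hc.le,
      Real.rpow_neg hc.le, mul_comm]

open scoped FourierTransform in
lemma ftNU_eq {n : ℕ} (φ : SchwartzMap (EuclideanSpace ℝ (Fin n)) ℂ)
    (x : EuclideanSpace ℝ (Fin n)) :
    ftNU (⇑φ) x = (𝓕 φ) ((2 * π)⁻¹ • x) := by
  rw [SchwartzMap.fourier_coe, Real.fourier_eq']
  unfold ftNU
  congr 1; ext v
  rw [smul_eq_mul, real_inner_smul_right]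
  congr 2
  push_cast
  have : (π : ℂ) ≠ 0 := by exact_mod_cast Real.pi_ne_zero
  field_simp

lemma continuous_ftNU {n : ℕ} (φ : SchwartzMap (EuclideanSpace ℝ (Fin n)) ℂ) :
    Continuous (ftNU (⇑φ)) := by
  have : ftNU (⇑φ) = fun x => (FourierTransform.fourier φ) ((2 * π)⁻¹ • x) := by
    ext x; exact ftNU_eq φ x
  rw [this]
  exact (SchwartzMap.continuous _).comp (continuous_const_smul _)

lemma schwartz_decay {n : ℕ} (f : SchwartzMap (EuclideanSpace ℝ (Fin n)) ℂ) (N : ℕ) :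
    ∃ C, 0 ≤ C ∧ ∀ x, (1 + ‖x‖) ^ N * ‖f x‖ ≤ C := by
  refine ⟨2 ^ N * (Finset.Iic (N, 0)).sup (fun m => SchwartzMap.seminorm ℝ m.1 m.2) f,
    by positivity, fun x => ?_⟩
  simpa using SchwartzMap.one_add_le_sup_seminorm_apply (𝕜 := ℝ) (m := (N, 0)) (k := N) (n := 0)
    le_rfl le_rfl f x

lemma ftNU_decay {n : ℕ} (φ : SchwartzMap (EuclideanSpace ℝ (Fin n)) ℂ) (N : ℕ) :
    ∃ C, 0 ≤ C ∧ ∀ x, (1 + ‖x‖) ^ N * ‖ftNU (⇑φ) x‖ ≤ C := by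
  obtain ⟨C, hC, h⟩ := schwartz_decay (FourierTransform.fourier φ) N
  refine ⟨(2 * π) ^ N * C, by positivity, fun x => ?_⟩
  have h1 := h ((2 * π)⁻¹ • x)
  rw [ftNU_eq]
  have hpi : 1 ≤ 2 * π := by have := Real.pi_gt_three; linarith
  have h2 : 1 + ‖x‖ ≤ (2 * π) * (1 + ‖(2 * π)⁻¹ • x‖) := by
    rw [norm_smul, Real.norm_eq_abs, abs_of_nonneg (by positivity), mul_add, ← mul_assoc,
      mul_inv_cancel₀ (by positivity)]
    linarith
  calc _ ≤ ((2 * π) * (1 + ‖(2 * π)⁻¹ • x‖)) ^ N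
          * ‖(FourierTransform.fourier φ) ((2 * π)⁻¹ • x)‖ := by gcongr
    _ = (2 * π) ^ N * ((1 + ‖(2 * π)⁻¹ • x‖) ^ N
          * ‖(FourierTransform.fourier φ) ((2 * π)⁻¹ • x)‖) := by rw [mul_pow]; ring
    _ ≤ _ := by gcongr

open scoped FourierTransform in
lemma ftNU_inversion {n : ℕ} (φ : SchwartzMap (EuclideanSpace ℝ (Fin n)) ℂ)
    (y : EuclideanSpace ℝ (Fin n)) :
    ∫ x, Complex.exp (Complex.I * (⟪x, y⟫ : ℂ)) * ftNU (⇑φ) x = ((2 * π) ^ n : ℝ) * φ y := by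
  have h1 : φ y = 𝓕⁻ (𝓕 φ) y := by rw [FourierTransform.fourierInv_fourier_eq]
  rw [SchwartzMap.fourierInv_coe, Real.fourierInv_eq'] at h1
  have h2 := Measure.integral_comp_smul (volume : Measure (EuclideanSpace ℝ (Fin n)))
    (fun v => Complex.exp ((↑(2 * π * ⟪v, y⟫) * Complex.I)) • (𝓕 φ) v) ((2 * π)⁻¹)
  rw [← h1] at h2
  have h3 : ∀ x, Complex.exp (Complex.I * (⟪x, y⟫ : ℂ)) * ftNU (⇑φ) x
      = (fun v => Complex.exp ((↑(2 * π * ⟪v, y⟫) * Complex.I)) • (𝓕 φ) v) ((2 * π)⁻¹ • x) := by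
    intro x
    rw [ftNU_eq]
    simp only [smul_eq_mul]
    rw [real_inner_smul_left]
    congr 2
    push_cast
    have : (π : ℂ) ≠ 0 := by exact_mod_cast Real.pi_ne_zero
    field_simp
  simp_rw [h3]
  rw [h2, finrank_euclideanSpace, Fintype.card_fin, inv_pow, inv_inv,
    abs_of_nonneg (by positivity), Complex.real_smul]

open Set in
lemma integrable_one_dim (q : ℝ) (hq : -1 < q) (M : ℕ) (hM : q - 2 * M < -1) :
    Integrable (fun y : ℝ => |y| ^ q * ((1 + y ^ 2) ^ M)⁻¹) := by
  have h : IntegrableOn (fun y : ℝ => |y| ^ q * ((1 + y ^ 2) ^ M)⁻¹) (Ioi 0) := by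
    refine integrableOn_Ioi_of_bounds (C := 1) (α := q) (β := q - 2 * M) ?_ hq hM ?_ ?_
    · refine ContinuousOn.mul ?_ ?_
      · exact (continuous_abs.continuousOn).rpow_const
          (fun x hx => Or.inl (abs_pos.2 (ne_of_gt hx)).ne')
      · apply Continuous.continuousOn
        exact Continuous.inv₀ (by fun_prop) (fun x => by positivity)
    · intro s hs _
      rw [abs_of_nonneg (by positivity), abs_of_nonneg hs.le, one_mul]
      apply mul_le_of_le_one_right (by positivity)
      apply inv_le_one_of_one_le₀
      apply one_le_pow₀
      nlinarith
    · intro s hs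
      have hs : 0 < s := by linarith
      rw [abs_of_nonneg (by positivity), abs_of_nonneg hs.le, one_mul, Real.rpow_sub hs,
        div_eq_mul_inv]
      gcongr
      rw [Real.rpow_mul hs.le, Real.rpow_natCast]
      gcongr
      norm_num
  rw [← integrableOn_univ, ← Iic_union_Ioi (a := (0:ℝ)), integrableOn_union]
  refine ⟨?_, h⟩
  rw [integrableOn_Iic_iff_integrableOn_Iio]
  have hneg := (Measure.measurePreserving_neg (volume : Measure ℝ)).integrableOn_comp_preimage
    (Homeomorph.neg ℝ).measurableEmbedding
    (f := fun y : ℝ => |y| ^ q * ((1 + y ^ 2) ^ M)⁻¹) (s := Ioi 0)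
  have h2 := hneg.2 h
  simpa [Function.comp_def] using h2

lemma integrable_main {n : ℕ} (hn : 1 ≤ n) (q : ℝ) (hq : -1 < q)
    (ψ : EuclideanSpace ℝ (Fin n) → ℂ) (hψ : Continuous ψ)
    (hd : ∀ N : ℕ, ∃ C, 0 ≤ C ∧ ∀ x, (1 + ‖x‖) ^ N * ‖ψ x‖ ≤ C)
    (ξ : EuclideanSpace ℝ (Fin n)) (hξ : ξ ≠ 0) :
    Integrable (fun x => ((|⟪x, ξ⟫| ^ q : ℝ) : ℂ) * ψ x) := by
  obtain ⟨M, hM⟩ := exists_nat_gt ((|q| + 1) / 2)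
  have hM1 : q - 2 * M < -1 := by have := le_abs_self q; linarith
  have hM0 : (0:ℝ) - 2 * M < -1 := by have := abs_nonneg q; linarith
  obtain ⟨C, hC, hC2⟩ := hd (2 * M * n)
  let i0 : Fin n := ⟨0, hn⟩
  have hξ' : ‖ξ‖ ≠ 0 := norm_ne_zero_iff.2 hξ
  obtain ⟨b, hb⟩ := Orthonormal.exists_orthonormalBasis_extension_of_card_eq (𝕜 := ℝ)
    (E := EuclideanSpace ℝ (Fin n)) (ι := Fin n) (by simp) (v := fun _ => ‖ξ‖⁻¹ • ξ) (s := {i0})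
    (by
      rw [orthonormal_iff_ite]
      rintro ⟨i, hi⟩ ⟨j, hj⟩
      have hi : i = i0 := hi
      have hj : j = i0 := hj
      subst hi; subst hj
      simp only [if_true, Set.domRestrict_apply, real_inner_self_eq_norm_sq, norm_smul, norm_inv,
        norm_norm, inv_mul_cancel₀ hξ', one_pow])
  have hb0 : b i0 = ‖ξ‖⁻¹ • ξ := hb i0 rfl
  have hξb : ξ = ‖ξ‖ • b i0 := by rw [hb0, smul_smul, mul_inv_cancel₀ hξ', one_smul]
  let G : Fin n → ℝ → ℝ := fun i y => (if i = i0 then |y| ^ q else |y| ^ (0:ℝ)) * ((1 + y ^ 2) ^ M)⁻¹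
  have hG : ∀ i, Integrable (G i) := by
    intro i
    by_cases hi : i = i0
    · simpa only [G, hi, if_true] using integrable_one_dim q hq M hM1
    · simpa only [G, hi, if_false] using integrable_one_dim 0 (by norm_num) M hM0
  have hP : Integrable (fun y : Fin n → ℝ => ∏ i, G i (y i)) := Integrable.fintype_prod hG
  have hmp : MeasurePreserving (fun x : EuclideanSpace ℝ (Fin n) => WithLp.ofLp (b.repr x)) :=
    (PiLp.volume_preserving_ofLp (Fin n)).comp b.measurePreserving_repr
  have hP2 : Integrable (fun x : EuclideanSpace ℝ (Fin n) => ∏ i, G i ((b.repr x) i)) :=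
    hmp.integrable_comp_of_integrable hP
  refine Integrable.mono' (hP2.const_mul (‖ξ‖ ^ q * C)) ?_ ?_
  · apply AEStronglyMeasurable.mul _ hψ.aestronglyMeasurable
    apply Measurable.aestronglyMeasurable
    fun_prop
  · refine Filter.Eventually.of_forall (fun x => ?_)
    have hin : ⟪x, ξ⟫ = ‖ξ‖ * (b.repr x) i0 := by
      conv_lhs => rw [hξb]
      rw [real_inner_smul_right, b.repr_apply_apply, real_inner_comm]
    have hcoord : ∀ i, |(b.repr x) i| ≤ ‖x‖ := by
      intro i
      have := PiLp.norm_apply_le (b.repr x) i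
      simpa using this
    have hprod : ∏ i, G i ((b.repr x) i)
        = |(b.repr x) i0| ^ q * (∏ i, (1 + (b.repr x) i ^ 2) ^ M)⁻¹ := by
      simp only [G, Finset.prod_mul_distrib, Real.rpow_zero, Finset.prod_inv_distrib]
      congr 1
      simp
    have hbd : ∏ i, (1 + (b.repr x) i ^ 2) ^ M ≤ (1 + ‖x‖) ^ (2 * M * n) := by
      calc ∏ i, (1 + (b.repr x) i ^ 2) ^ M ≤ ∏ i : Fin n, ((1 + ‖x‖) ^ 2) ^ M := by
            apply Finset.prod_le_prod
            · intro i _; positivity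
            · intro i _
              have h1 := hcoord i
              have h2 : (b.repr x) i ^ 2 ≤ ‖x‖ ^ 2 := sq_le_sq' (by linarith [neg_abs_le ((b.repr x) i)]) (by linarith [le_abs_self ((b.repr x) i)])
              gcongr
              nlinarith [norm_nonneg x]
        _ = _ := by simp [← pow_mul]
    have hpos : 0 < ∏ i, (1 + (b.repr x) i ^ 2) ^ M := Finset.prod_pos (fun i _ => by positivity)
    have hψx : ‖ψ x‖ ≤ C * (∏ i, (1 + (b.repr x) i ^ 2) ^ M)⁻¹ := by
      rw [← div_eq_mul_inv, le_div_iff₀ hpos]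
      calc _ ≤ ‖ψ x‖ * (1 + ‖x‖) ^ (2 * M * n) := by gcongr
        _ ≤ C := by rw [mul_comm]; exact hC2 x
    rw [norm_mul, Complex.norm_real, Real.norm_eq_abs, abs_of_nonneg (by positivity), hprod, hin,
      abs_mul, abs_of_nonneg (norm_nonneg ξ), Real.mul_rpow (norm_nonneg _) (abs_nonneg _)]
    calc _ ≤ ‖ξ‖ ^ q * |(b.repr x) i0| ^ q * (C * (∏ i, (1 + (b.repr x) i ^ 2) ^ M)⁻¹) := by gcongr
      _ = _ := by ring

section moments

variable {n : ℕ}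

lemma integrable_moment (hn : 1 ≤ n) (φ : SchwartzMap (EuclideanSpace ℝ (Fin n)) ℂ)
    (ξ : EuclideanSpace ℝ (Fin n)) (hξ : ξ ≠ 0) (k : ℕ) :
    Integrable (fun x => (⟪x, ξ⟫ : ℂ) ^ k * ftNU (⇑φ) x) := by
  have h := integrable_main hn k (by have : (0:ℝ) ≤ k := by positivity
                                     linarith) (ftNU (⇑φ)) (continuous_ftNU φ)
    (ftNU_decay φ) ξ hξ
  refine h.mono ?_ (Filter.Eventually.of_forall fun x => ?_)
  · have := continuous_ftNU φ
    apply Continuous.aestronglyMeasurable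
    fun_prop
  · rw [norm_mul, norm_mul, norm_pow, Complex.norm_real, Complex.norm_real, Real.norm_eq_abs,
      Real.norm_eq_abs, Real.rpow_natCast, abs_of_nonneg (by positivity : 0 ≤ |⟪x, ξ⟫| ^ k)]

lemma norm_exp_I_mul (a b : ℝ) : ‖Complex.exp (Complex.I * a * b)‖ = 1 := by
  have : Complex.I * a * b = ((a * b : ℝ) : ℂ) * Complex.I := by push_cast; ring
  rw [this, Complex.norm_exp_ofReal_mul_I]

lemma moment_deriv (hn : 1 ≤ n) (φ : SchwartzMap (EuclideanSpace ℝ (Fin n)) ℂ)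
    (ξ : EuclideanSpace ℝ (Fin n)) (hξ : ξ ≠ 0) (k : ℕ) (t₀ : ℝ) :
    HasDerivAt (fun t : ℝ => ∫ x, Complex.exp (Complex.I * (⟪x, ξ⟫ : ℝ) * t)
        * ((⟪x, ξ⟫ : ℂ) ^ k * ftNU (⇑φ) x))
      (∫ x, Complex.I * (Complex.exp (Complex.I * (⟪x, ξ⟫ : ℝ) * t₀)
        * ((⟪x, ξ⟫ : ℂ) ^ (k + 1) * ftNU (⇑φ) x))) t₀ := by
  have hc := continuous_ftNU φ
  refine (hasDerivAt_integral_of_dominated_loc_of_deriv_le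
    (F := fun (t : ℝ) x => Complex.exp (Complex.I * (⟪x, ξ⟫ : ℝ) * t)
        * ((⟪x, ξ⟫ : ℂ) ^ k * ftNU (⇑φ) x))
    (F' := fun (t : ℝ) x => Complex.I * (Complex.exp (Complex.I * (⟪x, ξ⟫ : ℝ) * t)
        * ((⟪x, ξ⟫ : ℂ) ^ (k + 1) * ftNU (⇑φ) x)))
    (bound := fun x => ‖(⟪x, ξ⟫ : ℂ) ^ (k + 1) * ftNU (⇑φ) x‖)
    (s := Set.univ) Filter.univ_mem ?_ ?_ ?_ ?_ ?_ ?_).2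
  · refine Filter.Eventually.of_forall fun t => ?_
    apply Continuous.aestronglyMeasurable
    fun_prop
  · refine (integrable_moment hn φ ξ hξ k).mono ?_ (Filter.Eventually.of_forall fun x => ?_)
    · apply Continuous.aestronglyMeasurable
      fun_prop
    · rw [norm_mul, norm_exp_I_mul, one_mul]
  · apply Continuous.aestronglyMeasurable
    fun_prop
  · refine Filter.Eventually.of_forall fun x t _ => ?_
    rw [norm_mul, norm_mul, norm_exp_I_mul, Complex.norm_I, one_mul, one_mul]
  · exact (integrable_moment hn φ ξ hξ (k + 1)).norm
  · refine Filter.Eventually.of_forall fun x t _ => ?_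
    have h1 : HasDerivAt (fun t : ℝ => Complex.I * (⟪x, ξ⟫ : ℝ) * (t : ℂ))
        (Complex.I * (⟪x, ξ⟫ : ℝ) * 1) t :=
      (Complex.ofRealCLM.hasDerivAt (x := t)).const_mul _
    convert! (h1.cexp).mul_const ((⟪x, ξ⟫ : ℂ) ^ k * ftNU (⇑φ) x) using 1
    rw [pow_succ]; ring

lemma exp_integral (φ : SchwartzMap (EuclideanSpace ℝ (Fin n)) ℂ)
    (ξ : EuclideanSpace ℝ (Fin n)) (t : ℝ) :
    ∫ x, Complex.exp (Complex.I * (⟪x, ξ⟫ : ℝ) * t) * ftNU (⇑φ) x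
      = ((2 * π) ^ n : ℝ) * φ (t • ξ) := by
  rw [← ftNU_inversion]
  congr 1; ext x
  rw [real_inner_smul_right]
  congr 2
  push_cast; ring

open Filter Topology in
lemma moment_zero (hn : 1 ≤ n) (φ : SchwartzMap (EuclideanSpace ℝ (Fin n)) ℂ)
    (hφ0 : (0 : EuclideanSpace ℝ (Fin n)) ∉ tsupport ⇑φ)
    (ξ : EuclideanSpace ℝ (Fin n)) (hξ : ξ ≠ 0) (k : ℕ) :
    ∫ x, (⟪x, ξ⟫ : ℂ) ^ k * ftNU (⇑φ) x = 0 := by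
  have key : ∀ k : ℕ, ∀ᶠ t : ℝ in 𝓝 0, ∫ x, Complex.exp (Complex.I * (⟪x, ξ⟫ : ℝ) * t)
        * ((⟪x, ξ⟫ : ℂ) ^ k * ftNU (⇑φ) x) = 0 := by
    intro k
    induction k with
    | zero =>
      have h1 : ∀ᶠ y in 𝓝 (0 : EuclideanSpace ℝ (Fin n)), φ y = 0 :=
        notMem_tsupport_iff_eventuallyEq.1 hφ0
      have h2 : Tendsto (fun t : ℝ => t • ξ) (𝓝 0) (𝓝 0) := by
        have : Continuous (fun t : ℝ => t • ξ) := by fun_prop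
        simpa using this.tendsto 0
      filter_upwards [h2.eventually h1] with t ht
      simp only [pow_zero, one_mul]
      rw [exp_integral, ht, mul_zero]
    | succ k ih =>
      filter_upwards [ih.eventually_nhds] with t ht
      have h1 := moment_deriv hn φ ξ hξ k t
      have h2 : HasDerivAt (fun t : ℝ => ∫ x, Complex.exp (Complex.I * (⟪x, ξ⟫ : ℝ) * t)
        * ((⟪x, ξ⟫ : ℂ) ^ k * ftNU (⇑φ) x)) 0 t :=
        (hasDerivAt_const t (0:ℂ)).congr_of_eventuallyEq ht
      have h3 := h1.unique h2
      rw [integral_const_mul] at h3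
      exact (mul_eq_zero.1 h3).resolve_left Complex.I_ne_zero
  have := (key k).self_of_nhds
  simpa using this

lemma gauss_eq (s z : ℝ) (hs : 0 < s) :
    ∫ t : ℝ, Complex.exp (Complex.I * z * t) * (Real.exp (-(t ^ 2 / 4 / s)) : ℂ)
      = (Real.sqrt (4 * π * s) : ℂ) * (Real.exp (-(s * z ^ 2)) : ℂ) := by
  have h := fourierIntegral_gaussian (b := ((1 / (4 * s) : ℝ) : ℂ))
    (by rw [Complex.ofReal_re]; positivity) (z : ℂ)
  have hs' : (s : ℂ) ≠ 0 := by exact_mod_cast hs.ne'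
  convert h using 1
  · congr 1; ext t
    push_cast
    congr 2
    field_simp
  · congr 1
    · rw [Real.sqrt_eq_rpow, Complex.ofReal_cpow (by positivity)]
      congr 1
      · push_cast; field_simp
      · push_cast; rfl
    · push_cast
      congr 1
      field_simp

lemma gauss_integral (hn : 1 ≤ n) (φ : SchwartzMap (EuclideanSpace ℝ (Fin n)) ℂ)
    (ξ : EuclideanSpace ℝ (Fin n)) (hξ : ξ ≠ 0) (s : ℝ) (hs : 0 < s) :
    (Real.sqrt (4 * π * s) : ℂ) * ∫ x, (Real.exp (-(s * ⟪x, ξ⟫ ^ 2)) : ℂ) * ftNU (⇑φ) x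
      = ((2 * π) ^ n : ℝ) * ∫ t : ℝ, (Real.exp (-(t ^ 2 / 4 / s)) : ℂ) * φ (t • ξ) := by
  have hc := continuous_ftNU φ
  have hI : Integrable (ftNU (⇑φ)) := by
    simpa using integrable_moment hn φ ξ hξ 0
  have hg : Integrable (fun t : ℝ => (Real.exp (-(t ^ 2 / 4 / s)) : ℂ)) := by
    have := (integrable_exp_neg_mul_sq (b := 1 / (4 * s)) (by positivity)).ofReal (𝕜 := ℂ)
    refine this.congr (Filter.Eventually.of_forall fun t => ?_)
    simp only
    congr 2
    field_simp
  have hF : Integrable (Function.uncurry (fun (x : EuclideanSpace ℝ (Fin n)) (t : ℝ) =>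
      Complex.exp (Complex.I * (⟪x, ξ⟫ : ℝ) * t) * (ftNU (⇑φ) x * (Real.exp (-(t ^ 2 / 4 / s)) : ℂ))))
      (volume.prod volume) := by
    refine (hI.mul_prod hg).mono ?_ (Filter.Eventually.of_forall fun p => ?_)
    · apply Continuous.aestronglyMeasurable
      unfold Function.uncurry
      fun_prop
    · simp only [Function.uncurry]
      rw [norm_mul, norm_exp_I_mul, one_mul]
  have hsw := integral_integral_swap hF
  calc _ = ∫ x, ∫ t : ℝ, Complex.exp (Complex.I * (⟪x, ξ⟫ : ℝ) * t)
        * (ftNU (⇑φ) x * (Real.exp (-(t ^ 2 / 4 / s)) : ℂ)) := by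
        rw [← integral_const_mul]
        congr 1; ext x
        rw [← mul_assoc, ← gauss_eq s _ hs, ← integral_mul_const]
        congr 1; ext t; ring
    _ = ∫ t : ℝ, ∫ x, Complex.exp (Complex.I * (⟪x, ξ⟫ : ℝ) * t)
        * (ftNU (⇑φ) x * (Real.exp (-(t ^ 2 / 4 / s)) : ℂ)) := hsw
    _ = _ := by
        rw [← integral_const_mul]
        congr 1; ext t
        calc _ = ∫ x, (Complex.exp (Complex.I * (⟪x, ξ⟫ : ℝ) * t)
            * ftNU (⇑φ) x) * (Real.exp (-(t ^ 2 / 4 / s)) : ℂ) := by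
              congr 1; ext x; ring
          _ = _ := by rw [integral_mul_const, exp_integral]; ring

lemma rem_integral (hn : 1 ≤ n) (φ : SchwartzMap (EuclideanSpace ℝ (Fin n)) ℂ)
    (hφ0 : (0 : EuclideanSpace ℝ (Fin n)) ∉ tsupport ⇑φ)
    (ξ : EuclideanSpace ℝ (Fin n)) (hξ : ξ ≠ 0) (k : ℕ) (s : ℝ) (hs : 0 < s) :
    ∫ x, (expRem k (s * ⟪x, ξ⟫ ^ 2) : ℂ) * ftNU (⇑φ) x
      = ∫ x, (Real.exp (-(s * ⟪x, ξ⟫ ^ 2)) : ℂ) * ftNU (⇑φ) x := by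
  have hc := continuous_ftNU φ
  have hI : Integrable (ftNU (⇑φ)) := by
    simpa using integrable_moment hn φ ξ hξ 0
  have hE : Integrable (fun x => (Real.exp (-(s * ⟪x, ξ⟫ ^ 2)) : ℂ) * ftNU (⇑φ) x) := by
    refine hI.mono ?_ (Filter.Eventually.of_forall fun x => ?_)
    · apply Continuous.aestronglyMeasurable
      fun_prop
    · rw [norm_mul, Complex.norm_real, Real.norm_eq_abs, Real.abs_exp]
      apply mul_le_of_le_one_left (norm_nonneg _)
      rw [Real.exp_le_one_iff]
      have : 0 ≤ s * ⟪x, ξ⟫ ^ 2 := by positivity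
      linarith
  have hS : ∀ i, Integrable (fun x => ((-s) ^ i / (i.factorial : ℝ) : ℂ)
      * ((⟪x, ξ⟫ : ℂ) ^ (2 * i) * ftNU (⇑φ) x)) :=
    fun i => (integrable_moment hn φ ξ hξ (2 * i)).const_mul _
  have heq : ∀ x, (expRem k (s * ⟪x, ξ⟫ ^ 2) : ℂ) * ftNU (⇑φ) x
      = (Real.exp (-(s * ⟪x, ξ⟫ ^ 2)) : ℂ) * ftNU (⇑φ) x
        - ∑ i ∈ Finset.range k, ((-s) ^ i / (i.factorial : ℝ) : ℂ)
      * ((⟪x, ξ⟫ : ℂ) ^ (2 * i) * ftNU (⇑φ) x) := by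
    intro x
    unfold expRem
    rw [Complex.ofReal_sub, sub_mul, Complex.ofReal_sum, Finset.sum_mul]
    congr 1
    refine Finset.sum_congr rfl fun i _ => ?_
    push_cast
    rw [pow_mul, ← neg_mul, mul_pow]; ring
  simp_rw [heq]
  rw [integral_sub hE (integrable_finsetSum _ fun i _ => hS i), integral_finsetSum _ fun i _ => hS i]
  simp [integral_const_mul, moment_zero hn φ hφ0 ξ hξ]

end moments

lemma ae_inner_ne {n : ℕ} (ξ : EuclideanSpace ℝ (Fin n)) (hξ : ξ ≠ 0) :
    ∀ᵐ x : EuclideanSpace ℝ (Fin n), ⟪x, ξ⟫ ≠ 0 := by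
  have h := Measure.addHaar_submodule (volume : Measure (EuclideanSpace ℝ (Fin n)))
    (LinearMap.ker (innerₗ (EuclideanSpace ℝ (Fin n)) ξ)) (by
      intro htop
      have : ξ ∈ LinearMap.ker (innerₗ (EuclideanSpace ℝ (Fin n)) ξ) := by rw [htop]; trivial
      rw [LinearMap.mem_ker, innerₗ_apply_apply] at this
      exact hξ (inner_self_eq_zero.1 this))
  rw [ae_iff]
  convert h using 2
  ext x
  simp [real_inner_comm]

lemma sq_rpow_half (z q : ℝ) : (z ^ 2) ^ (q / 2) = |z| ^ q := by
  rw [← sq_abs, ← Real.rpow_natCast, ← Real.rpow_mul (abs_nonneg z)]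
  congr 1; push_cast; ring

lemma lemmaA {n : ℕ} (hn : 1 ≤ n) (q : ℝ) (hq : -1 < q) (k : ℕ) (h1 : (k : ℝ) - 1 < q / 2)
    (h2 : q / 2 < k)
    (φ : SchwartzMap (EuclideanSpace ℝ (Fin n)) ℂ)
    (hφ0 : (0 : EuclideanSpace ℝ (Fin n)) ∉ tsupport ⇑φ)
    (ξ : EuclideanSpace ℝ (Fin n)) (hξ : ξ ≠ 0) :
    (Real.Gamma (-(q / 2)) : ℂ) * ∫ x, ((|⟪x, ξ⟫| ^ q : ℝ) : ℂ) * ftNU ⇑φ x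
      = ∫ s in Set.Ioi (0:ℝ), ((s ^ (-(q / 2) - 1) : ℝ) : ℂ) *
          ∫ x, (Real.exp (-(s * ⟪x, ξ⟫ ^ 2)) : ℂ) * ftNU (⇑φ) x := by
  have hc := continuous_ftNU φ
  have hmain := integrable_main hn q hq _ hc (ftNU_decay φ) ξ hξ
  have hIntR := integrableOn_expRem k (q / 2) h1 h2
  have hm := (continuous_expRem k).measurable
  have hF : Integrable (Function.uncurry (fun (x : EuclideanSpace ℝ (Fin n)) (s : ℝ) =>
      ((s ^ (-(q / 2) - 1) * expRem k (s * ⟪x, ξ⟫ ^ 2) : ℝ) : ℂ) * ftNU (⇑φ) x))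
      (volume.prod (volume.restrict (Set.Ioi 0))) := by
    rw [integrable_prod_iff]
    · constructor
      · filter_upwards [ae_inner_ne ξ hξ] with x hx
        have hx2 : 0 < ⟪x, ξ⟫ ^ 2 := by positivity
        have := integrableOn_scale (expRem k) (q / 2) _ hx2 hIntR
        exact (Integrable.ofReal (𝕜 := ℂ) this).mul_const (ftNU (⇑φ) x)
      · have hb := hmain.norm.const_mul (∫ s in Set.Ioi (0:ℝ), s ^ (-(q / 2) - 1) * |expRem k s|)
        refine hb.congr ?_
        filter_upwards [ae_inner_ne ξ hξ] with x hx
        have hx2 : 0 < ⟪x, ξ⟫ ^ 2 := by positivity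
        have hsc := integral_scale (fun u => |expRem k u|) (q / 2) _ hx2
        rw [sq_rpow_half] at hsc
        simp only [Function.uncurry]
        rw [norm_mul, Complex.norm_real, Real.norm_of_nonneg (by positivity)]
        rw [← mul_assoc, mul_comm (∫ s in Set.Ioi (0:ℝ), s ^ (-(q / 2) - 1) * |expRem k s|), ← hsc,
          ← integral_mul_const]
        refine setIntegral_congr_fun measurableSet_Ioi (fun s hs => ?_)
        have hs : 0 < s := hs
        rw [norm_mul, Complex.norm_real, norm_mul, Real.norm_eq_abs, Real.norm_eq_abs,
          abs_of_nonneg (by positivity : (0:ℝ) ≤ s ^ (-(q / 2) - 1))]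
    · apply Measurable.aestronglyMeasurable
      have := hc.measurable
      unfold Function.uncurry
      fun_prop
  have hsw := integral_integral_swap hF
  calc _ = ∫ x, ∫ s in Set.Ioi (0:ℝ),
        ((s ^ (-(q / 2) - 1) * expRem k (s * ⟪x, ξ⟫ ^ 2) : ℝ) : ℂ) * ftNU (⇑φ) x := by
        rw [← integral_const_mul]
        apply integral_congr_ae
        filter_upwards [ae_inner_ne ξ hξ] with x hx
        have hx2 : 0 < ⟪x, ξ⟫ ^ 2 := by positivity
        have hsc := integral_scale (expRem k) (q / 2) _ hx2
        rw [sq_rpow_half, integral_expRem k _ h1 h2] at hsc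
        rw [integral_mul_const, integral_complex_ofReal, hsc]
        push_cast; ring
    _ = ∫ s in Set.Ioi (0:ℝ), ∫ x,
        ((s ^ (-(q / 2) - 1) * expRem k (s * ⟪x, ξ⟫ ^ 2) : ℝ) : ℂ) * ftNU (⇑φ) x := hsw
    _ = _ := by
        refine setIntegral_congr_fun measurableSet_Ioi (fun s hs => ?_)
        have hs : 0 < s := hs
        rw [← rem_integral hn φ hφ0 ξ hξ k s hs, ← integral_const_mul]
        congr 1; ext x; push_cast; ring

lemma integrable_line {n : ℕ} (q : ℝ) (hq : -1 < q)
    (φ : SchwartzMap (EuclideanSpace ℝ (Fin n)) ℂ)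
    (hφ0 : (0 : EuclideanSpace ℝ (Fin n)) ∉ tsupport ⇑φ)
    (ξ : EuclideanSpace ℝ (Fin n)) (hξ : ξ ≠ 0) :
    Integrable (fun t : ℝ => ((|t| ^ (-1 - q) : ℝ) : ℂ) * φ (t • ξ)) := by
  have hξ' : 0 < ‖ξ‖ := norm_pos_iff.2 hξ
  obtain ⟨C, hC, hd⟩ := schwartz_decay φ 2
  have h1 : ∀ᶠ y in nhds (0 : EuclideanSpace ℝ (Fin n)), φ y = 0 :=
    notMem_tsupport_iff_eventuallyEq.1 hφ0
  have h2 : Filter.Tendsto (fun t : ℝ => t • ξ) (nhds 0) (nhds 0) := by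
    have : Continuous (fun t : ℝ => t • ξ) := by fun_prop
    simpa using this.tendsto 0
  obtain ⟨δ, hδ, hδ2⟩ := Metric.eventually_nhds_iff.1 (h2.eventually h1)
  have hJ : Integrable (fun t : ℝ => (1 + (t * ‖ξ‖) ^ 2)⁻¹) :=
    (integrable_inv_one_add_sq).comp_mul_right' hξ'.ne'
  refine Integrable.mono' (hJ.const_mul (δ ^ (-1 - q) * C)) ?_ (Filter.Eventually.of_forall fun t => ?_)
  · have : Continuous fun t : ℝ => φ (t • ξ) := φ.continuous.comp (by fun_prop)
    have := this.measurable
    apply Measurable.aestronglyMeasurable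
    fun_prop
  · rw [norm_mul, Complex.norm_real, Real.norm_of_nonneg (by positivity)]
    by_cases ht : |t| < δ
    · rw [hδ2 (by simpa using ht)]
      simp only [norm_zero, mul_zero]
      positivity
    · push Not at ht
      have hp : |t| ^ (-1 - q) ≤ δ ^ (-1 - q) :=
        Real.rpow_le_rpow_of_nonpos hδ ht (by linarith)
      have hb : ‖φ (t • ξ)‖ ≤ C * (1 + (t * ‖ξ‖) ^ 2)⁻¹ := by
        rw [← div_eq_mul_inv, le_div_iff₀ (by positivity)]
        have := hd (t • ξ)
        rw [norm_smul, Real.norm_eq_abs] at this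
        have h3 : 1 + (t * ‖ξ‖) ^ 2 ≤ (1 + |t| * ‖ξ‖) ^ 2 := by
          rw [mul_pow, ← sq_abs t]
          nlinarith [mul_nonneg (abs_nonneg t) hξ'.le]
        calc _ ≤ ‖φ (t • ξ)‖ * (1 + |t| * ‖ξ‖) ^ 2 := by gcongr
          _ ≤ C := by rw [mul_comm]; exact this
      calc _ ≤ δ ^ (-1 - q) * (C * (1 + (t * ‖ξ‖) ^ 2)⁻¹) := by gcongr
        _ = _ := by ring

lemma invGamma_t (q : ℝ) (hq : -1 < q) (t : ℝ) (ht : t ≠ 0) :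
    Real.Gamma ((q + 1) / 2) * (t ^ 2 / 4) ^ (-((q + 1) / 2))
      = Real.Gamma ((q + 1) / 2) * 2 ^ (q + 1) * |t| ^ (-1 - q) := by
  have : t ^ 2 / 4 = (|t| / 2) ^ 2 := by rw [div_pow, sq_abs]; norm_num
  rw [this, ← Real.rpow_natCast, ← Real.rpow_mul (by positivity), Real.div_rpow (by positivity) (by norm_num)]
  have e : ((2:ℕ):ℝ) * -((q + 1) / 2) = -1 - q := by push_cast; ring
  rw [e, show -1 - q = -(q + 1) by ring, Real.rpow_neg (by norm_num : (0:ℝ) ≤ 2)]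
  field_simp

lemma lemmaB {n : ℕ} (q : ℝ) (hq : -1 < q)
    (φ : SchwartzMap (EuclideanSpace ℝ (Fin n)) ℂ)
    (hφ0 : (0 : EuclideanSpace ℝ (Fin n)) ∉ tsupport ⇑φ)
    (ξ : EuclideanSpace ℝ (Fin n)) (hξ : ξ ≠ 0) :
    ∫ s in Set.Ioi (0:ℝ), ((s ^ (-((q + 1) / 2) - 1) : ℝ) : ℂ) *
          ∫ t : ℝ, (Real.exp (-(t ^ 2 / 4 / s)) : ℂ) * φ (t • ξ)
      = ((Real.Gamma ((q + 1) / 2) * 2 ^ (q + 1) : ℝ) : ℂ) *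
          ∫ t : ℝ, ((|t| ^ (-1 - q) : ℝ) : ℂ) * φ (t • ξ) := by
  have hline := integrable_line q hq φ hφ0 ξ hξ
  have hφc : Continuous fun t : ℝ => φ (t • ξ) := φ.continuous.comp (by fun_prop)
  have hp : 0 < (q + 1) / 2 := by linarith
  have hae : ∀ᵐ t : ℝ, t ≠ 0 := by simp [ae_iff]
  have hF : Integrable (Function.uncurry (fun (t : ℝ) (s : ℝ) =>
      ((s ^ (-((q + 1) / 2) - 1) * Real.exp (-(t ^ 2 / 4 / s)) : ℝ) : ℂ) * φ (t • ξ)))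
      (volume.prod (volume.restrict (Set.Ioi 0))) := by
    rw [integrable_prod_iff]
    · constructor
      · filter_upwards [hae] with t ht
        have := (integral_invGamma ((q + 1) / 2) (t ^ 2 / 4) hp (by positivity)).1
        exact (Integrable.ofReal (𝕜 := ℂ) this).mul_const (φ (t • ξ))
      · have hb := hline.norm.const_mul (Real.Gamma ((q + 1) / 2) * 2 ^ (q + 1))
        refine hb.congr ?_
        filter_upwards [hae] with t ht
        have h2 := (integral_invGamma ((q + 1) / 2) (t ^ 2 / 4) hp (by positivity)).2
        rw [invGamma_t q hq t ht] at h2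
        simp only [Function.uncurry]
        rw [norm_mul, Complex.norm_real, Real.norm_of_nonneg (by positivity), ← mul_assoc, ← h2,
          ← integral_mul_const]
        refine setIntegral_congr_fun measurableSet_Ioi (fun s hs => ?_)
        have hs : 0 < s := hs
        rw [norm_mul, Complex.norm_real, Real.norm_of_nonneg (by positivity)]
    · apply Measurable.aestronglyMeasurable
      have h3 : Measurable fun p : ℝ × ℝ => φ (p.1 • ξ) := hφc.measurable.comp measurable_fst
      unfold Function.uncurry
      fun_prop
  have hsw := integral_integral_swap hF
  calc _ = ∫ s in Set.Ioi (0:ℝ), ∫ t : ℝ,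
        ((s ^ (-((q + 1) / 2) - 1) * Real.exp (-(t ^ 2 / 4 / s)) : ℝ) : ℂ) * φ (t • ξ) := by
        congr 1; ext s
        rw [← integral_const_mul]
        congr 1; ext t; push_cast; ring
    _ = ∫ t : ℝ, ∫ s in Set.Ioi (0:ℝ),
        ((s ^ (-((q + 1) / 2) - 1) * Real.exp (-(t ^ 2 / 4 / s)) : ℝ) : ℂ) * φ (t • ξ) := hsw.symm
    _ = _ := by
        rw [← integral_const_mul]
        apply integral_congr_ae
        filter_upwards [hae] with t ht
        have h2 := (integral_invGamma ((q + 1) / 2) (t ^ 2 / 4) hp (by positivity)).2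
        rw [invGamma_t q hq t ht] at h2
        rw [integral_mul_const, integral_complex_ofReal, h2]
        push_cast; ring

lemma exists_k (q : ℝ) (hq : -1 < q) (hqne : ∀ m : ℤ, q ≠ 2 * (m : ℝ)) :
    ∃ k : ℕ, (k : ℝ) - 1 < q / 2 ∧ q / 2 < k := by
  have h0 : 0 ≤ ⌈q / 2⌉ := by
    have : -1 < ⌈q / 2⌉ := by
      rw [Int.lt_ceil]; push_cast; linarith
    omega
  refine ⟨⌈q / 2⌉.toNat, ?_⟩
  have e : ((⌈q / 2⌉.toNat : ℕ) : ℝ) = ((⌈q / 2⌉ : ℤ) : ℝ) := by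
    exact_mod_cast Int.toNat_of_nonneg h0
  rw [e]
  have h1 := Int.ceil_lt_add_one (q / 2)
  have h2 := Int.le_ceil (q / 2)
  refine ⟨by linarith, lt_of_le_of_ne h2 ?_⟩
  intro h
  exact hqne ⌈q / 2⌉ (by linarith)

/-- for `q > -1` not an even integer, every even Schwartz function `φ`
supported away from the origin, and every `ξ ≠ 0`,
`∫_{ℝⁿ} |(x,ξ)|^q φ̂(x) dx = (2π)^{n-1} C_q ∫_ℝ |t|^{-1-q} φ(tξ) dt`. -/
theorem statement0 (n : ℕ) (hn : 1 ≤ n) (q : ℝ) (hq : -1 < q)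
    (hqne : ∀ m : ℤ, q ≠ 2 * (m : ℝ))
    (φ : SchwartzMap (EuclideanSpace ℝ (Fin n)) ℂ)
    (hφe : ∀ x, φ (-x) = φ x)
    (hφ0 : (0 : EuclideanSpace ℝ (Fin n)) ∉ tsupport ⇑φ)
    (ξ : EuclideanSpace ℝ (Fin n)) (hξ : ξ ≠ 0) :
    ∫ x, ((|⟪x, ξ⟫| ^ q : ℝ) : ℂ) * ftNU ⇑φ x
      = (((2 * π) ^ (n - 1) * Cq q : ℝ) : ℂ)
          * ∫ t : ℝ, ((|t| ^ (-1 - q) : ℝ) : ℂ) * φ (t • ξ) := by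
  obtain ⟨k, hk1, hk2⟩ := exists_k q hq hqne
  have hA := lemmaA hn q hq k hk1 hk2 φ hφ0 ξ hξ
  have hB := lemmaB q hq φ hφ0 ξ hξ
  have hG : Real.Gamma (-(q / 2)) ≠ 0 := by
    apply Real.Gamma_ne_zero
    intro m hm
    apply hqne (m : ℤ)
    push_cast
    linarith
  have hpi : 0 < π := Real.pi_pos
  have hsπ : Real.sqrt π ≠ 0 := (Real.sqrt_pos.2 hpi).ne'
  have hstep : ∫ s in Set.Ioi (0:ℝ), ((s ^ (-(q / 2) - 1) : ℝ) : ℂ) *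
          ∫ x, (Real.exp (-(s * ⟪x, ξ⟫ ^ 2)) : ℂ) * ftNU (⇑φ) x
      = (((2 * π) ^ n * (2 * Real.sqrt π)⁻¹ : ℝ) : ℂ) *
        ∫ s in Set.Ioi (0:ℝ), ((s ^ (-((q + 1) / 2) - 1) : ℝ) : ℂ) *
          ∫ t : ℝ, (Real.exp (-(t ^ 2 / 4 / s)) : ℂ) * φ (t • ξ) := by
    rw [← integral_const_mul]
    refine setIntegral_congr_fun measurableSet_Ioi (fun s hs => ?_)
    have hs : 0 < s := hs
    have hg := gauss_integral hn φ ξ hξ s hs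
    have hsq : Real.sqrt (4 * π * s) = 2 * Real.sqrt π * s ^ (1 / 2 : ℝ) := by
      rw [Real.sqrt_mul (by positivity), Real.sqrt_mul (by norm_num), ← Real.sqrt_eq_rpow]
      congr 2
      rw [show (4:ℝ) = 2 ^ 2 by norm_num, Real.sqrt_sq (by norm_num)]
    have hs2 : s ^ (-(q / 2) - 1) = s ^ (-((q + 1) / 2) - 1) * s ^ (1 / 2 : ℝ) := by
      rw [← Real.rpow_add hs]; congr 1; ring
    have hc : s ^ (-(q / 2) - 1)
        = (2 * Real.sqrt π)⁻¹ * s ^ (-((q + 1) / 2) - 1) * Real.sqrt (4 * π * s) := by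
      rw [hsq, hs2]; field_simp
    rw [hc, Complex.ofReal_mul, mul_assoc, hg]
    push_cast; ring
  rw [hstep, hB] at hA
  have hGc : (Real.Gamma (-(q / 2)) : ℂ) ≠ 0 := by exact_mod_cast hG
  apply mul_left_cancel₀ hGc
  rw [hA]
  rw [← mul_assoc, ← mul_assoc, ← Complex.ofReal_mul, ← Complex.ofReal_mul]
  congr 2
  unfold Cq
  rw [show -q / 2 = -(q / 2) by ring]
  obtain ⟨m, rfl⟩ : ∃ m, n = m + 1 := ⟨n - 1, by omega⟩
  rw [Nat.add_sub_cancel, pow_succ]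
  have hs3 : π = Real.sqrt π * Real.sqrt π := (Real.mul_self_sqrt hpi.le).symm
  field_simp
  rw [Real.sq_sqrt hpi.le]

end
end

section
/- Let n ≥ 1, let q > -1 be not an even integer, and let μ be a finite Borel signed measure on the unit sphere Ω of ℝⁿ that is symmetric (invariant under x ↦ -x). Define G(x) = ∫_Ω |(x,ξ)|^q dμ(ξ) for x ∈ ℝⁿ. Then for every even Schwartz function φ on ℝⁿ with 0 ∉ supp(φ), the Fourier transform Ĝ of G in the sense of tempered distributions satisfies (Ĝ, φ) = (2π)^{n-1} C_q ∫_Ω (∫_ℝ |t|^{-1-q} φ(tξ) dt) dμ(ξ). -/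
open MeasureTheory Metric
open scoped Real RealInnerProductSpace ENNReal

noncomputable section

/-- Integral of a real function against a signed measure, via the Jordan decomposition. -/
def sInt {α : Type*} [MeasurableSpace α] (μ : SignedMeasure α) (f : α → ℝ) : ℝ :=
  (∫ x, f x ∂μ.toJordanDecomposition.posPart) - ∫ x, f x ∂μ.toJordanDecomposition.negPart

/-- Integral of a complex function against a signed measure, via the Jordan decomposition. -/
def csInt {α : Type*} [MeasurableSpace α] (μ : SignedMeasure α) (f : α → ℂ) : ℂ :=
  (∫ x, f x ∂μ.toJordanDecomposition.posPart) - ∫ x, f x ∂μ.toJordanDecomposition.negPart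


namespace KoldProof

open Set Filter Topology

/-- decay of Schwartz functions -/
lemma schwartz_decay {V : Type*} [NormedAddCommGroup V] [NormedSpace ℝ V] (f : SchwartzMap V ℂ)
    (k : ℕ) : ∃ C : ℝ, 0 ≤ C ∧ ∀ x, ‖f x‖ ≤ C * ((1 + ‖x‖) ^ k)⁻¹ := by
  refine ⟨2 ^ k * ((Finset.Iic (k, 0)).sup fun m => SchwartzMap.seminorm ℝ m.1 m.2) f, by positivity, fun x => ?_⟩
  have h := SchwartzMap.one_add_le_sup_seminorm_apply (𝕜 := ℝ) (m := (k, 0)) (le_refl k) (le_refl 0) f x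
  rw [norm_iteratedFDeriv_zero] at h
  have hp : 0 < (1 + ‖x‖) ^ k := by positivity
  rw [← div_eq_mul_inv, le_div_iff₀ hp]
  linarith

lemma integrable_even {f : ℝ → ℝ} (h : IntegrableOn (fun t => f t) (Ioi 0))
    (he : ∀ t, f (-t) = f t) : Integrable f := by
  have h2 : IntegrableOn f (Iic 0) := by
    have := (integrableOn_Ici_iff_integrableOn_Ioi (f := f) (b := (0:ℝ)) (μ := volume)).2 h
    have h3 := ((Measure.measurePreserving_neg (volume : Measure ℝ)).integrableOn_comp_preimage
      (MeasurableEquiv.neg ℝ).measurableEmbedding).2 this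
    have h4 : f ∘ Neg.neg = f := funext he
    rw [h4] at h3
    simpa using h3
  rw [← integrableOn_univ, ← Iic_union_Ioi (a := (0:ℝ))]
  exact h2.union h

lemma integrable_one_dim {q : ℝ} (hq : -1 < q) {k : ℕ} (hk : q + 1 < k) :
    Integrable (fun t : ℝ => |t| ^ q * ((1 + |t|) ^ k)⁻¹) := by
  apply integrable_even _ (by intro t; simp)
  have := mellin_convergent_of_isBigO_scalar (a := k) (b := 0) (s := q + 1)
    (f := fun t => ((1 + |t|) ^ k)⁻¹) ?_ ?_ hk ?_ (by linarith)
  · refine this.congr_fun (fun t ht => ?_) measurableSet_Ioi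
    simp [abs_of_pos (show 0 < t from ht)]
  · apply Continuous.locallyIntegrable _ |>.locallyIntegrableOn
    apply Continuous.inv₀ (by fun_prop)
    intro t
    positivity
  · apply Asymptotics.IsBigO.of_bound 1
    filter_upwards [eventually_gt_atTop 0] with t ht
    rw [Real.rpow_neg ht.le, Real.rpow_natCast, one_mul, norm_inv, norm_inv, norm_pow, norm_pow]
    rw [Real.norm_eq_abs, Real.norm_eq_abs, abs_of_pos ht, abs_of_pos (by linarith)]
    gcongr
    linarith
  · apply Asymptotics.IsBigO.of_bound 1
    filter_upwards with t
    simp only [neg_zero, Real.rpow_zero, norm_inv, norm_pow, norm_one, mul_one]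
    apply inv_le_one_of_one_le₀
    apply one_le_pow₀
    rw [Real.norm_eq_abs, abs_of_pos (by positivity)]
    linarith [abs_nonneg t]

variable {n : ℕ}

lemma integrable_e0 (i0 : Fin n) {q : ℝ} (hq : -1 < q) {k : ℕ} (hk : q + 1 < k) (hk1 : 1 < k) :
    Integrable (fun x : EuclideanSpace ℝ (Fin n) => |x i0| ^ q * ((1 + ‖x‖) ^ (n * k))⁻¹) := by
  have h1 : Integrable (fun x : Fin n → ℝ =>
      ∏ i, (fun i (t : ℝ) => (if i = i0 then |t| ^ q else 1) * ((1 + |t|) ^ k)⁻¹) i (x i)) := by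
    apply Integrable.fintype_prod (f := fun i (t : ℝ) => (if i = i0 then |t| ^ q else 1) * ((1 + |t|) ^ k)⁻¹)
    intro i
    by_cases hi : i = i0
    · simpa [hi] using integrable_one_dim hq hk
    · have := integrable_one_dim (q := 0) (by norm_num) (k := k) (by simpa using hk1)
      simpa [hi] using this
  have h2 := (PiLp.volume_preserving_ofLp (Fin n)).integrable_comp_of_integrable h1
  refine h2.mono' ?_ ?_
  · apply Measurable.aestronglyMeasurable
    fun_prop
  · filter_upwards with x
    simp only [Function.comp]
    rw [Finset.prod_mul_distrib, Finset.prod_ite_eq' Finset.univ i0, if_pos (Finset.mem_univ _),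
      Real.norm_eq_abs, abs_of_nonneg (by positivity)]
    gcongr
    rw [Finset.prod_inv_distrib]
    have : ∏ i, (1 + |x i|) ^ k ≤ ∏ i : Fin n, (1 + ‖x‖) ^ k := by
      apply Finset.prod_le_prod
      · intros; positivity
      · intro i _
        gcongr
        simpa using PiLp.norm_apply_le x i
    apply inv_anti₀ (by apply Finset.prod_pos; intros; positivity)
    refine this.trans (le_of_eq ?_)
    simp [← pow_mul, mul_comm]

lemma exists_K (hn : 1 ≤ n) {q : ℝ} (hq : -1 < q) {k : ℕ} (hk : q + 1 < k) (hk1 : 1 < k) :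
    ∃ K : ℝ, ∀ ξ : EuclideanSpace ℝ (Fin n), ‖ξ‖ = 1 →
      Integrable (fun x : EuclideanSpace ℝ (Fin n) => |⟪x, ξ⟫| ^ q * ((1 + ‖x‖) ^ (n * k))⁻¹) ∧
      ∫ x : EuclideanSpace ℝ (Fin n), |⟪x, ξ⟫| ^ q * ((1 + ‖x‖) ^ (n * k))⁻¹ = K := by
  let i0 : Fin n := ⟨0, hn⟩
  refine ⟨∫ x : EuclideanSpace ℝ (Fin n), |x i0| ^ q * ((1 + ‖x‖) ^ (n * k))⁻¹, fun ξ hξ => ?_⟩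
  let e : EuclideanSpace ℝ (Fin n) := EuclideanSpace.single i0 1
  let R := (ℝ ∙ (ξ - e))ᗮ.reflection
  have hR : R ξ = e := Submodule.reflection_sub (by simp [e, hξ])
  have hfun : (fun x : EuclideanSpace ℝ (Fin n) => |⟪x, ξ⟫| ^ q * ((1 + ‖x‖) ^ (n * k))⁻¹) =
      (fun x : EuclideanSpace ℝ (Fin n) => |x i0| ^ q * ((1 + ‖x‖) ^ (n * k))⁻¹) ∘ R := by
    funext x
    simp only [Function.comp, LinearIsometryEquiv.norm_map]
    rw [← R.inner_map_map x ξ, hR]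
    simp [e, EuclideanSpace.inner_single_right]
  constructor
  · rw [hfun]
    exact R.measurePreserving.integrable_comp_of_integrable (integrable_e0 i0 hq hk hk1)
  · rw [hfun]
    exact R.measurePreserving.integral_comp R.toHomeomorph.measurableEmbedding
      (fun x : EuclideanSpace ℝ (Fin n) => |x i0| ^ q * ((1 + ‖x‖) ^ (n * k))⁻¹)

lemma integrable_psi (hn : 1 ≤ n) {q : ℝ} (hq : -1 < q)
    (ψ : SchwartzMap (EuclideanSpace ℝ (Fin n)) ℂ) :
    ∃ K : ℝ, ∀ ξ : EuclideanSpace ℝ (Fin n), ‖ξ‖ = 1 →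
      Integrable (fun x : EuclideanSpace ℝ (Fin n) => ((|⟪x, ξ⟫| ^ q : ℝ) : ℂ) * ψ x) ∧
      ∫ x : EuclideanSpace ℝ (Fin n), ‖((|⟪x, ξ⟫| ^ q : ℝ) : ℂ) * ψ x‖ ≤ K := by
  obtain ⟨k, hk⟩ := exists_nat_gt (max (q + 1) 1)
  have hk0 : q + 1 < k := (le_max_left _ _).trans_lt hk
  have hk1 : 1 < k := by exact_mod_cast (le_max_right _ _).trans_lt hk
  obtain ⟨K, hK⟩ := exists_K hn hq hk0 hk1
  obtain ⟨C, hC0, hC⟩ := schwartz_decay ψ (n * k)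
  refine ⟨C * K, fun ξ hξ => ?_⟩
  obtain ⟨h1, h2⟩ := hK ξ hξ
  have hb : ∀ x, ‖((|⟪x, ξ⟫| ^ q : ℝ) : ℂ) * ψ x‖ ≤ C * (|⟪x, ξ⟫| ^ q * ((1 + ‖x‖) ^ (n * k))⁻¹) := by
    intro x
    rw [norm_mul, Complex.norm_real, Real.norm_eq_abs, abs_of_nonneg (by positivity)]
    calc _ ≤ |⟪x, ξ⟫| ^ q * (C * ((1 + ‖x‖) ^ (n * k))⁻¹) := by gcongr; exact hC x
      _ = _ := by ring
  have hI : Integrable (fun x : EuclideanSpace ℝ (Fin n) => ((|⟪x, ξ⟫| ^ q : ℝ) : ℂ) * ψ x) := by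
    refine (h1.const_mul C).mono' ?_ (Eventually.of_forall hb)
    apply Measurable.aestronglyMeasurable
    have := ψ.continuous.measurable
    fun_prop
  refine ⟨hI, ?_⟩
  rw [← h2, ← integral_const_mul]
  exact integral_mono hI.norm (h1.const_mul C) hb

open FourierTransform in
lemma exists_psi (φ : SchwartzMap (EuclideanSpace ℝ (Fin n)) ℂ) :
    ∃ ψ : SchwartzMap (EuclideanSpace ℝ (Fin n)) ℂ, (∀ x, ψ x = ftNU φ x) ∧
      ∀ y, ∫ x, Complex.exp (Complex.I * (⟪x, y⟫ : ℝ)) * ψ x = (((2 * π) ^ n : ℝ) : ℂ) * φ y := by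
  have hpi : (2 * π)⁻¹ ≠ 0 := by positivity
  let e : EuclideanSpace ℝ (Fin n) ≃L[ℝ] EuclideanSpace ℝ (Fin n) :=
    ContinuousLinearEquiv.smulLeft (Units.mk0 ((2 * π)⁻¹) hpi)
  let ψ := SchwartzMap.compCLMOfContinuousLinearEquiv ℂ e (𝓕 φ)
  have hψ : ∀ x, ψ x = (𝓕 φ) ((2 * π)⁻¹ • x) := fun x => rfl
  refine ⟨ψ, fun x => ?_, fun y => ?_⟩
  · rw [hψ, SchwartzMap.fourier_coe, Real.fourier_eq', ftNU]
    congr 1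
    funext v
    rw [smul_eq_mul, inner_smul_right]
    congr 2
    push_cast
    have : (π : ℂ) ≠ 0 := by exact_mod_cast Real.pi_ne_zero
    field_simp
  · simp_rw [hψ]
    have h1 : φ y = 𝓕⁻ (𝓕 φ) y := by rw [fourierInv_fourier_eq]
    rw [h1, SchwartzMap.fourierInv_coe, Real.fourierInv_eq']
    have := Measure.integral_comp_smul (volume : Measure (EuclideanSpace ℝ (Fin n))) 
      (fun v => Complex.exp (((2 * π * ⟪v, y⟫ : ℝ) : ℂ) * Complex.I) • (𝓕 φ) v) ((2 * π)⁻¹)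
    rw [finrank_euclideanSpace_fin, inv_pow, inv_inv, abs_of_pos (by positivity)] at this
    rw [← Complex.real_smul, ← this]
    congr 1
    funext x
    rw [smul_eq_mul, inner_smul_left]
    congr 2
    push_cast
    have : (π : ℂ) ≠ 0 := by exact_mod_cast Real.pi_ne_zero
    simp
    field_simp

end KoldProof

namespace KoldProof

open Set Filter Topology

lemma gaussian_step {n : ℕ} (φ ψ : SchwartzMap (EuclideanSpace ℝ (Fin n)) ℂ)
    (hinv : ∀ y, ∫ x, Complex.exp (Complex.I * (⟪x, y⟫ : ℝ)) * ψ x = (((2 * π) ^ n : ℝ) : ℂ) * φ y)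
    (ξ : EuclideanSpace ℝ (Fin n)) {v : ℝ} (hv : 0 < v) :
    ((√(π / v) : ℝ) : ℂ) * ∫ x, ((Real.exp (-(⟪x, ξ⟫ ^ 2) / (4 * v)) : ℝ) : ℂ) * ψ x =
      (((2 * π) ^ n : ℝ) : ℂ) * ∫ s : ℝ, ((Real.exp (-v * s ^ 2) : ℝ) : ℂ) * φ (s • ξ) := by
  have hprodInt : Integrable (Function.uncurry fun (s : ℝ) (x : EuclideanSpace ℝ (Fin n)) =>
      Complex.exp (Complex.I * (⟪x, s • ξ⟫ : ℝ)) * (((Real.exp (-v * s ^ 2) : ℝ) : ℂ) * ψ x))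
      (volume.prod volume) := by
    have h1 : Integrable (fun s : ℝ => ((Real.exp (-v * s ^ 2) : ℝ) : ℂ)) :=
      (integrable_exp_neg_mul_sq hv).ofReal
    have h2 := h1.mul_prod (ψ.integrable (μ := volume))
    refine h2.mono ?_ ?_
    · apply Continuous.aestronglyMeasurable
      have := ψ.continuous
      simp only [Function.uncurry_def]
      fun_prop
    · filter_upwards with p
      simp only [Function.uncurry_def, norm_mul]
      rw [mul_comm Complex.I, Complex.norm_exp_ofReal_mul_I, one_mul]
  calc _ = ∫ x, ∫ s : ℝ, Complex.exp (Complex.I * (⟪x, s • ξ⟫ : ℝ)) * (((Real.exp (-v * s ^ 2) : ℝ) : ℂ) * ψ x) := by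
        rw [← integral_const_mul]
        congr 1
        funext x
        have h := fourierIntegral_gaussian (b := (v : ℂ)) (by simpa using hv) ((⟪x, ξ⟫ : ℝ) : ℂ)
        simp_rw [← mul_assoc]
        rw [integral_mul_const]
        congr 1
        have h3 : ((π : ℂ) / v) ^ (1 / 2 : ℂ) = ((√(π / v) : ℝ) : ℂ) := by
          rw [Real.sqrt_eq_rpow, Complex.ofReal_cpow (by positivity)]
          push_cast
          rfl
        rw [h3] at h
        push_cast
        rw [← h]
        congr 1
        funext s
        rw [inner_smul_right]
        push_cast
        ring_nf
    _ = ∫ s : ℝ, ∫ x, Complex.exp (Complex.I * (⟪x, s • ξ⟫ : ℝ)) * (((Real.exp (-v * s ^ 2) : ℝ) : ℂ) * ψ x) :=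
        (integral_integral_swap hprodInt).symm
    _ = _ := by
        rw [← integral_const_mul]
        congr 1
        funext s
        rw [mul_left_comm, ← hinv, ← integral_const_mul]
        congr 1
        funext x
        ring

lemma fubini_kernel {α : Type*} [MeasurableSpace α] (m : Measure α) [SFinite m] (k : ℝ → α → ℝ)
    (hk : Measurable (Function.uncurry k)) (hk0 : ∀ v x, 0 < v → 0 ≤ k v x) (w : α → ℝ)
    (h : ∀ᵐ x ∂m, IntegrableOn (fun v => k v x) (Ioi 0) ∧ ∫ v in Ioi 0, k v x = w x)
    (g : α → ℂ) (hg : Measurable g) (hI : Integrable (fun x => (w x : ℂ) * g x) m) :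
    ∫ v in Ioi (0:ℝ), ∫ x, (k v x : ℂ) * g x ∂m = ∫ x, (w x : ℂ) * g x ∂m := by
  have hprodInt : Integrable (Function.uncurry fun (v : ℝ) (x : α) => (k v x : ℂ) * g x)
      ((volume.restrict (Ioi (0:ℝ))).prod m) := by
    rw [integrable_prod_iff']
    · constructor
      · filter_upwards [h] with x hx
        exact (Integrable.ofReal (𝕜 := ℂ) hx.1).mul_const (g x)
      · refine hI.norm.congr ?_
        filter_upwards [h] with x hx
        simp only [Function.uncurry_apply_pair, norm_mul, Complex.norm_real]
        rw [integral_mul_const]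
        congr 1
        have : ∫ v in Ioi (0:ℝ), ‖k v x‖ = w x := by
          rw [← hx.2]
          refine setIntegral_congr_fun measurableSet_Ioi (fun v hv => ?_)
          exact Real.norm_of_nonneg (hk0 v x hv)
        rw [this, Real.norm_of_nonneg]
        rw [← hx.2]
        exact setIntegral_nonneg measurableSet_Ioi (fun v hv => hk0 v x hv)
    · apply Measurable.aestronglyMeasurable
      exact (Complex.measurable_ofReal.comp hk).mul (hg.comp measurable_snd)
  rw [integral_integral_swap hprodInt]
  apply integral_congr_ae
  filter_upwards [h] with x hx
  rw [integral_mul_const, integral_complex_ofReal, hx.2]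

lemma gamma_int1 {q s : ℝ} (hq : -1 < q) (hs : s ≠ 0) :
    IntegrableOn (fun v : ℝ => v ^ ((q + 1) / 2 - 1) * Real.exp (-v * s ^ 2)) (Ioi 0) ∧
    ∫ v in Ioi (0:ℝ), v ^ ((q + 1) / 2 - 1) * Real.exp (-v * s ^ 2)
      = Real.Gamma ((q + 1) / 2) * |s| ^ (-1 - q) := by
  have ha : 0 < (q + 1) / 2 := by linarith
  have hr : 0 < s ^ 2 := by positivity
  have h := Real.integral_rpow_mul_exp_neg_mul_Ioi ha hr
  have hG := Real.Gamma_pos_of_pos ha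
  have e1 : (fun v : ℝ => v ^ ((q + 1) / 2 - 1) * Real.exp (-v * s ^ 2)) =
    (fun t : ℝ => t ^ ((q + 1) / 2 - 1) * Real.exp (-(s ^ 2 * t))) := by
    funext v; ring_nf
  have hne : ∫ v in Ioi (0:ℝ), v ^ ((q + 1) / 2 - 1) * Real.exp (-v * s ^ 2) ≠ 0 := by
    rw [e1, h]; positivity
  refine ⟨not_imp_comm.1 integral_undef hne, ?_⟩
  rw [e1, h, mul_comm]
  congr 1
  rw [← sq_abs, one_div, ← Real.rpow_natCast, ← Real.rpow_neg (abs_nonneg _),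
    ← Real.rpow_mul (abs_nonneg _)]
  congr 1
  push_cast
  ring

lemma gamma_int2 {q r : ℝ} (hq : q < 0) (hr : r ≠ 0) :
    IntegrableOn (fun v : ℝ => v ^ (q / 2 - 1) * Real.exp (-(r ^ 2) / (4 * v))) (Ioi 0) ∧
    ∫ v in Ioi (0:ℝ), v ^ (q / 2 - 1) * Real.exp (-(r ^ 2) / (4 * v))
      = Real.Gamma (-q / 2) * 2 ^ (-q) * |r| ^ q := by
  have ha : 0 < -q / 2 := by linarith
  have hr2 : 0 < (|r| / 2) ^ 2 := by positivity
  have h := Real.integral_rpow_mul_exp_neg_mul_Ioi ha hr2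
  rw [← integral_comp_rpow_Ioi _ (p := -1) (by norm_num)] at h
  have e1 : ∫ v in Ioi (0:ℝ), v ^ (q / 2 - 1) * Real.exp (-(r ^ 2) / (4 * v)) =
      (1 / (|r| / 2) ^ 2) ^ (-q / 2) * Real.Gamma (-q / 2) := by
    rw [← h]
    refine setIntegral_congr_fun measurableSet_Ioi (fun v hv => ?_)
    have hv : 0 < v := hv
    simp only [smul_eq_mul]
    rw [← Real.rpow_mul hv.le, abs_neg, abs_one, one_mul, ← mul_assoc, ← Real.rpow_add hv,
      Real.rpow_neg_one]
    congr 2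
    · ring
    · rw [div_pow, sq_abs]
      field_simp
      norm_num
  have hG := Real.Gamma_pos_of_pos ha
  have hne : ∫ v in Ioi (0:ℝ), v ^ (q / 2 - 1) * Real.exp (-(r ^ 2) / (4 * v)) ≠ 0 := by
    rw [e1]; positivity
  refine ⟨not_imp_comm.1 integral_undef hne, ?_⟩
  rw [e1, mul_comm, mul_assoc]
  congr 1
  have hr0 : 0 ≤ |r| / 2 := by positivity
  rw [one_div, ← Real.rpow_natCast, ← Real.rpow_neg hr0, ← Real.rpow_mul hr0]
  rw [show -((2:ℕ):ℝ) * (-q / 2) = q by push_cast; ring]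
  rw [Real.div_rpow (abs_nonneg _) (by norm_num), Real.rpow_neg (by norm_num)]
  field_simp

lemma ae_inner_ne {n : ℕ} {ξ : EuclideanSpace ℝ (Fin n)} (hξ : ‖ξ‖ = 1) :
    ∀ᵐ x : EuclideanSpace ℝ (Fin n), ⟪x, ξ⟫ ≠ 0 := by
  have h : (ℝ ∙ ξ)ᗮ ≠ ⊤ := by
    intro h
    have : ξ ∈ (ℝ ∙ ξ)ᗮ := by rw [h]; trivial
    rw [Submodule.mem_orthogonal_singleton_iff_inner_right] at this
    rw [real_inner_self_eq_norm_sq, hξ] at this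
    norm_num at this
  have h2 := Measure.addHaar_submodule (volume : Measure (EuclideanSpace ℝ (Fin n))) _ h
  rw [ae_iff]
  convert h2 using 2
  ext x
  simp only [ne_eq, not_not, mem_ofPred_eq, SetLike.mem_coe]
  rw [Submodule.mem_orthogonal_singleton_iff_inner_left]

lemma phi_integrable {n : ℕ} (φ : SchwartzMap (EuclideanSpace ℝ (Fin n)) ℂ)
    (hφ0 : (0 : EuclideanSpace ℝ (Fin n)) ∉ tsupport ⇑φ)
    {ξ : EuclideanSpace ℝ (Fin n)} (hξ : ‖ξ‖ = 1) (a : ℝ) :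
    Integrable (fun t : ℝ => ((|t| ^ a : ℝ) : ℂ) * φ (t • ξ)) := by
  have h0 : ∀ᶠ x in 𝓝 (0 : EuclideanSpace ℝ (Fin n)), φ x = 0 :=
    notMem_tsupport_iff_eventuallyEq.1 hφ0
  obtain ⟨δ, hδ, hball⟩ := Metric.eventually_nhds_iff.1 h0
  obtain ⟨b, hb⟩ := exists_nat_ge a
  obtain ⟨C, hC0, hC⟩ := schwartz_decay φ (b + 2)
  have h1 := (integrable_one_dim (q := b) (by have : (0:ℝ) ≤ b := by positivity
                                              linarith) (k := b + 2)
    (by push_cast; linarith)).const_mul (δ ^ (a - b) * C)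
  refine h1.mono' ?_ ?_
  · apply Measurable.aestronglyMeasurable
    have : Measurable fun t : ℝ => φ (t • ξ) := by
      have := φ.continuous
      apply Continuous.measurable
      fun_prop
    fun_prop
  · filter_upwards with t
    have hn : ‖t • ξ‖ = |t| := by rw [norm_smul, hξ, mul_one, Real.norm_eq_abs]
    rw [norm_mul, Complex.norm_real, Real.norm_of_nonneg (by positivity)]
    by_cases ht : |t| < δ
    · rw [hball (by rw [dist_zero_right, hn]; exact ht)]
      rw [norm_zero, mul_zero]
      positivity
    · push Not at ht
      have ht0 : 0 < |t| := hδ.trans_le ht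
      have h2 := hC (t • ξ)
      rw [hn] at h2
      have h3 : |t| ^ a ≤ δ ^ (a - b) * |t| ^ (b : ℝ) := by
        have : |t| ^ a = |t| ^ (a - b) * |t| ^ (b:ℝ) := by
          rw [← Real.rpow_add ht0]; congr 1; ring
        rw [this]
        gcongr ?_ * _
        exact Real.rpow_le_rpow_of_nonpos hδ ht (by linarith)
      calc _ ≤ (δ ^ (a - b) * |t| ^ (b : ℝ)) * (C * ((1 + |t|) ^ (b + 2))⁻¹) := by gcongr
        _ = _ := by ring

lemma base_case {n : ℕ} (hn : 1 ≤ n) (φ ψ : SchwartzMap (EuclideanSpace ℝ (Fin n)) ℂ)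
    (hφ0 : (0 : EuclideanSpace ℝ (Fin n)) ∉ tsupport ⇑φ)
    (hinv : ∀ y, ∫ x, Complex.exp (Complex.I * (⟪x, y⟫ : ℝ)) * ψ x = (((2 * π) ^ n : ℝ) : ℂ) * φ y)
    {ξ : EuclideanSpace ℝ (Fin n)} (hξ : ‖ξ‖ = 1) {q : ℝ} (hq : -1 < q) (hq0 : q < 0) :
    ∫ x, ((|⟪x, ξ⟫| ^ q : ℝ) : ℂ) * ψ x = (((2 * π) ^ (n - 1) * Cq q : ℝ) : ℂ) *
      ∫ t : ℝ, ((|t| ^ (-1 - q) : ℝ) : ℂ) * φ (t • ξ) := by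
  have hφm : Measurable fun t : ℝ => φ (t • ξ) := by
    have := φ.continuous
    apply Continuous.measurable
    fun_prop
  obtain ⟨K, hK⟩ := integrable_psi hn hq ψ
  have F1 := fubini_kernel (volume : Measure (EuclideanSpace ℝ (Fin n)))
    (fun v x => v ^ (q / 2 - 1) * Real.exp (-(⟪x, ξ⟫ ^ 2) / (4 * v)))
    (by simp only [Function.uncurry_def]; fun_prop) (fun v x hv => by positivity)
    (fun x => Real.Gamma (-q / 2) * 2 ^ (-q) * |⟪x, ξ⟫| ^ q)
    (by filter_upwards [ae_inner_ne hξ] with x hx using gamma_int2 hq0 hx)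
    ψ ψ.continuous.measurable
    (by
      have := (hK ξ hξ).1.const_mul ((Real.Gamma (-q / 2) * 2 ^ (-q) : ℝ) : ℂ)
      refine this.congr (Eventually.of_forall fun x => ?_)
      push_cast
      ring)
  have F2 := fubini_kernel (volume : Measure ℝ)
    (fun v s => v ^ ((q + 1) / 2 - 1) * Real.exp (-v * s ^ 2))
    (by simp only [Function.uncurry_def]; fun_prop) (fun v x hv => by positivity)
    (fun s => Real.Gamma ((q + 1) / 2) * |s| ^ (-1 - q))
    (by filter_upwards [Measure.ae_ne volume (0:ℝ)] with s hs using gamma_int1 hq hs)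
    (fun s => φ (s • ξ)) hφm
    (by
      have := (phi_integrable φ hφ0 hξ (-1 - q)).const_mul ((Real.Gamma ((q + 1) / 2) : ℝ) : ℂ)
      refine this.congr (Eventually.of_forall fun x => ?_)
      push_cast
      ring)
  have key : ((√π : ℝ) : ℂ) * ∫ v in Ioi (0:ℝ), ∫ x, ((v ^ (q / 2 - 1) * Real.exp (-(⟪x, ξ⟫ ^ 2) / (4 * v)) : ℝ) : ℂ) * ψ x
      = (((2 * π) ^ n : ℝ) : ℂ) * ∫ v in Ioi (0:ℝ), ∫ s : ℝ, ((v ^ ((q + 1) / 2 - 1) * Real.exp (-v * s ^ 2) : ℝ) : ℂ) * φ (s • ξ) := by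
    rw [← integral_const_mul, ← integral_const_mul]
    refine setIntegral_congr_fun measurableSet_Ioi (fun v hv => ?_)
    have hv : 0 < v := hv
    have hg := gaussian_step φ ψ hinv ξ hv
    simp only [Complex.ofReal_mul, mul_assoc] at hg ⊢
    rw [integral_const_mul, integral_const_mul, mul_left_comm _ ((v ^ ((q + 1) / 2 - 1) : ℝ) : ℂ)]
    rw [← hg, ← mul_assoc, ← mul_assoc]
    congr 1
    rw [← Complex.ofReal_mul, ← Complex.ofReal_mul]
    congr 1
    rw [Real.sqrt_div Real.pi_pos.le, Real.sqrt_eq_rpow v, div_eq_mul_inv √π, ← Real.rpow_neg hv.le,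
      mul_left_comm, ← Real.rpow_add hv]
    congr 2
    ring
  rw [F1, F2] at key
  have hG := Real.Gamma_pos_of_pos (show 0 < -q / 2 by linarith)
  simp only [Complex.ofReal_mul, mul_assoc] at key
  simp only [integral_const_mul] at key
  set L := ∫ x, ((|⟪x, ξ⟫| ^ q : ℝ) : ℂ) * ψ x
  set R := ∫ t : ℝ, ((|t| ^ (-1 - q) : ℝ) : ℂ) * φ (t • ξ)
  have hc : ((√π * (Real.Gamma (-q / 2) * 2 ^ (-q)) : ℝ) : ℂ) ≠ 0 := by
    have : 0 < √π * (Real.Gamma (-q / 2) * 2 ^ (-q)) := by positivity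
    exact_mod_cast this.ne'
  have hreal : (√π * (Real.Gamma (-q / 2) * 2 ^ (-q))) * ((2 * π) ^ (n - 1) * Cq q) =
      (2 * π) ^ n * Real.Gamma ((q + 1) / 2) := by
    obtain ⟨m, rfl⟩ : ∃ m, n = m + 1 := ⟨n - 1, by omega⟩
    rw [Cq, Real.rpow_neg (by norm_num), Real.rpow_add (by norm_num), Real.rpow_one]
    have h2 : (2:ℝ) ^ q ≠ 0 := by positivity
    have h3 : √π * √π = π := Real.mul_self_sqrt Real.pi_pos.le
    have hG' := hG.ne'
    simp only [Nat.add_sub_cancel]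
    generalize Real.Gamma (-q / 2) = A at hG' ⊢
    generalize Real.Gamma ((q + 1) / 2) = B
    generalize (2:ℝ) ^ q = D at h2 ⊢
    calc _ = (√π * √π) * (A * A⁻¹) * (D * D⁻¹) * 2 * (2 * π) ^ m * B := by ring
      _ = _ := by rw [h3, mul_inv_cancel₀ hG', mul_inv_cancel₀ h2]; ring
  apply mul_left_cancel₀ hc
  rw [← mul_assoc (_ : ℂ) _ R, ← Complex.ofReal_mul, hreal]
  simp only [Complex.ofReal_mul, mul_assoc]
  simpa only [Complex.ofReal_pow, Complex.ofReal_mul, mul_assoc] using key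

end KoldProof

namespace KoldProof

open Set Filter Topology

lemma rpow_le_add {y b c d : ℝ} (hy : 0 < y) (hc : c ≤ b) (hd : b ≤ d) :
    y ^ b ≤ y ^ c + y ^ d := by
  rcases le_total 1 y with h | h
  · have := Real.rpow_le_rpow_of_exponent_le h hd
    have : 0 < y ^ c := by positivity
    linarith
  · have := Real.rpow_le_rpow_of_exponent_ge hy h hc
    have : 0 < y ^ d := by positivity
    linarith

lemma log_bound {y b c d ε : ℝ} (hy : 0 < y) (hε : 0 < ε) (hc : c + ε ≤ b) (hd : b + ε ≤ d) :
    y ^ b * |Real.log y| ≤ (2 / ε) * (y ^ c + y ^ d) := by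
  have h1 : |Real.log y| ≤ (y ^ ε + y ^ (-ε)) / ε := by
    have hp1 : 0 < y ^ ε := by positivity
    have hp2 : 0 < y ^ (-ε) := by positivity
    rw [abs_le', le_div_iff₀ hε, le_div_iff₀ hε]
    have l1 := Real.log_le_rpow_div hy.le hε
    have l2 := Real.log_le_rpow_div (inv_pos.2 hy).le hε
    rw [Real.log_inv, Real.inv_rpow hy.le, ← Real.rpow_neg hy.le] at l2
    rw [le_div_iff₀ hε] at l1 l2
    constructor <;> linarith
  have h2 : y ^ b * y ^ ε ≤ y ^ c + y ^ d := by
    rw [← Real.rpow_add hy]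
    exact rpow_le_add hy (by linarith) hd
  have h3 : y ^ b * y ^ (-ε) ≤ y ^ c + y ^ d := by
    rw [← Real.rpow_add hy]
    exact rpow_le_add hy (by linarith) (by linarith)
  calc y ^ b * |Real.log y| ≤ y ^ b * ((y ^ ε + y ^ (-ε)) / ε) := by gcongr
    _ = (y ^ b * y ^ ε + y ^ b * y ^ (-ε)) / ε := by ring
    _ ≤ ((y ^ c + y ^ d) + (y ^ c + y ^ d)) / ε := by gcongr
    _ = _ := by ring

lemma diff_param {α : Type*} [MeasurableSpace α] (m : Measure α) (f : α → ℝ) (hf : Measurable f)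
    (hf0 : ∀ᵐ x ∂m, 0 < f x) (g : α → ℂ) (hg : Measurable g) (S : Set ℝ) (hS : IsOpen S)
    (hI : ∀ a ∈ S, Integrable (fun x => ((f x ^ a : ℝ) : ℂ) * g x) m) (z : ℂ) (hz : z.re ∈ S) :
    DifferentiableAt ℂ (fun z => ∫ x, (f x : ℂ) ^ z * g x ∂m) z := by
  obtain ⟨δ, hδ, hball⟩ := Metric.isOpen_iff.1 hS z.re hz
  set ε := δ / 3 with hε
  have hε0 : 0 < ε := by positivity
  have hc : z.re - 2 * ε ∈ S := hball (by
    rw [Metric.mem_ball, Real.dist_eq, abs_lt]; constructor <;> linarith)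
  have hd : z.re + 2 * ε ∈ S := hball (by
    rw [Metric.mem_ball, Real.dist_eq, abs_lt]; constructor <;> linarith)
  have hmeas : ∀ w : ℂ, Measurable (fun x => (f x : ℂ) ^ w * g x) := by
    intro w
    fun_prop
  refine (hasDerivAt_integral_of_dominated_loc_of_deriv_le (𝕜 := ℂ)
    (F := fun z x => (f x : ℂ) ^ z * g x)
    (F' := fun z x => (f x : ℂ) ^ z * Complex.log (f x) * g x)
    (bound := fun x => (2 / ε) * (‖((f x ^ (z.re - 2 * ε) : ℝ) : ℂ) * g x‖ + ‖((f x ^ (z.re + 2 * ε) : ℝ) : ℂ) * g x‖))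
    (s := Metric.ball z ε) (Metric.ball_mem_nhds z hε0)
    (Eventually.of_forall fun w => (hmeas w).aestronglyMeasurable) ?_ ?_ ?_ ?_ ?_).2.differentiableAt
  · refine (hI _ hz).mono (hmeas z).aestronglyMeasurable ?_
    filter_upwards [hf0] with x hx
    rw [norm_mul, norm_mul, Complex.norm_cpow_eq_rpow_re_of_pos hx, Complex.norm_real,
      Real.norm_of_nonneg (by positivity)]
  · apply Measurable.aestronglyMeasurable
    fun_prop
  · filter_upwards [hf0] with x hx w hw
    rw [mem_ball_iff_norm] at hw
    have hre := (Complex.abs_re_le_norm (w - z)).trans_lt hw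
    rw [Complex.sub_re, abs_lt] at hre
    rw [norm_mul, norm_mul, norm_mul, norm_mul, Complex.norm_cpow_eq_rpow_re_of_pos hx,
      Complex.norm_real, Complex.norm_real,
      Real.norm_of_nonneg (by positivity), Real.norm_of_nonneg (by positivity), ← add_mul,
      ← mul_assoc, ← Complex.ofReal_log hx.le, Complex.norm_real, Real.norm_eq_abs]
    have hb := log_bound (b := w.re) (c := z.re - 2 * ε) (d := z.re + 2 * ε) hx hε0
      (by linarith) (by linarith)
    exact mul_le_mul_of_nonneg_right hb (norm_nonneg _)
  · exact ((hI _ hc).norm.add (hI _ hd).norm).const_mul _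
  · filter_upwards [hf0] with x hx w _
    have hx' : (f x : ℂ) ≠ 0 := by exact_mod_cast hx.ne'
    have h := (HasDerivAt.const_cpow (hasDerivAt_id w) (Or.inl hx')).mul_const (g x)
    simpa using h

lemma general_case {n : ℕ} (hn : 1 ≤ n) (φ ψ : SchwartzMap (EuclideanSpace ℝ (Fin n)) ℂ)
    (hφ0 : (0 : EuclideanSpace ℝ (Fin n)) ∉ tsupport ⇑φ)
    (hinv : ∀ y, ∫ x, Complex.exp (Complex.I * (⟪x, y⟫ : ℝ)) * ψ x = (((2 * π) ^ n : ℝ) : ℂ) * φ y)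
    {ξ : EuclideanSpace ℝ (Fin n)} (hξ : ‖ξ‖ = 1) {q : ℝ} (hq : -1 < q) :
    ∫ x, ((|⟪x, ξ⟫| ^ q : ℝ) : ℂ) * ψ x = (((2 * π) ^ (n - 1) * Cq q : ℝ) : ℂ) *
      ∫ t : ℝ, ((|t| ^ (-1 - q) : ℝ) : ℂ) * φ (t • ξ) := by
  have hφm : Measurable fun t : ℝ => φ (t • ξ) := by
    have := φ.continuous
    apply Continuous.measurable
    fun_prop
  let U : Set ℂ := {z | -1 < z.re}
  have hUo : IsOpen U := isOpen_lt continuous_const Complex.continuous_re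
  have hUc : IsPreconnected U := (convex_halfSpace_re_gt (-1)).isPreconnected
  let L : ℂ → ℂ := fun z => ∫ x : EuclideanSpace ℝ (Fin n), ((|⟪x, ξ⟫| : ℝ) : ℂ) ^ z * ψ x
  let R : ℂ → ℂ := fun z => ∫ t : ℝ, ((|t| : ℝ) : ℂ) ^ z * φ (t • ξ)
  let D : ℂ → ℂ := fun z => (((2 * π) ^ (n - 1) : ℝ) : ℂ) *
    ((2 : ℂ) ^ (z + 1) * ((√π : ℝ) : ℂ) * Complex.Gamma ((z + 1) / 2) * (Complex.Gamma (-z / 2))⁻¹)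
  have hL : DifferentiableOn ℂ L U := by
    intro z hz
    refine (diff_param volume (fun x : EuclideanSpace ℝ (Fin n) => |⟪x, ξ⟫|) (by fun_prop) ?_ ψ
      ψ.continuous.measurable (Ioi (-1)) isOpen_Ioi ?_ z hz).differentiableWithinAt
    · filter_upwards [ae_inner_ne hξ] with x hx using abs_pos.2 hx
    · intro a ha
      obtain ⟨K, hK⟩ := integrable_psi hn (q := a) ha ψ
      exact (hK ξ hξ).1
  have hR : Differentiable ℂ R := by
    intro z
    refine diff_param volume (fun t : ℝ => |t|) (by fun_prop) ?_ (fun t => φ (t • ξ))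
      hφm univ isOpen_univ (fun a _ => phi_integrable φ hφ0 hξ a) z trivial
    filter_upwards [Measure.ae_ne volume (0:ℝ)] with t ht using abs_pos.2 ht
  have hD : DifferentiableOn ℂ D U := by
    intro z hz
    have hz : -1 < z.re := hz
    apply DifferentiableAt.differentiableWithinAt
    have h1 : DifferentiableAt ℂ (fun z : ℂ => Complex.Gamma ((z + 1) / 2)) z := by
      apply DifferentiableAt.comp (g := Complex.Gamma) (f := fun z : ℂ => (z + 1) / 2)
      · apply Complex.differentiableAt_Gamma
        intro m hm
        have := congrArg Complex.re hm
        have h2 : ((z + 1) / 2).re = (z.re + 1) / 2 := by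
          have : (z + 1) / 2 = (z + 1) / ((2 : ℝ) : ℂ) := by norm_num
          rw [this, Complex.div_ofReal_re]; simp
        rw [h2] at this
        simp at this
        have hm0 : (0:ℝ) ≤ m := by positivity
        linarith
      · fun_prop
    have h2 : DifferentiableAt ℂ (fun z : ℂ => (Complex.Gamma (-z / 2))⁻¹) z :=
      (Complex.differentiable_one_div_Gamma.comp
        (f := fun z : ℂ => -z / 2) (by fun_prop)).differentiableAt
    have h3 : DifferentiableAt ℂ (fun z : ℂ => (2 : ℂ) ^ (z + 1)) z :=
      DifferentiableAt.const_cpow (by fun_prop) (Or.inl two_ne_zero)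
    exact (((h3.mul_const _).mul h1).mul h2).const_mul _
  have hRHS : DifferentiableOn ℂ (fun z => D z * R (-1 - z)) U :=
    hD.mul ((hR.comp (f := fun z : ℂ => -1 - z) (by fun_prop)).differentiableOn)
  have cL : ∀ p : ℝ, L p = ∫ x, ((|⟪x, ξ⟫| ^ p : ℝ) : ℂ) * ψ x := by
    intro p
    simp only [L]
    congr 1
    funext x
    rw [Complex.ofReal_cpow (abs_nonneg _)]
  have cR : ∀ p : ℝ, R (-1 - p) = ∫ t : ℝ, ((|t| ^ (-1 - p) : ℝ) : ℂ) * φ (t • ξ) := by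
    intro p
    simp only [R]
    congr 1
    funext x
    rw [Complex.ofReal_cpow (abs_nonneg _)]
    push_cast
    rfl
  have cD : ∀ p : ℝ, D p = (((2 * π) ^ (n - 1) * Cq p : ℝ) : ℂ) := by
    intro p
    simp only [D, Cq]
    rw [Complex.ofReal_mul _ (_ / _), Complex.ofReal_div, Complex.ofReal_mul, Complex.ofReal_mul,
      Complex.ofReal_cpow (by norm_num), ← Complex.Gamma_ofReal, ← Complex.Gamma_ofReal]
    push_cast
    rw [div_eq_mul_inv _ (Complex.Gamma _)]
  have heq : EqOn L (fun z => D z * R (-1 - z)) U := by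
    refine (hL.analyticOnNhd hUo).eqOn_of_preconnected_of_frequently_eq (hRHS.analyticOnNhd hUo)
      hUc (z₀ := ((-1/2 : ℝ) : ℂ)) (by simp only [U, mem_ofPred_eq, Complex.ofReal_re]; norm_num) ?_
    have ht : Tendsto (fun p : ℝ => (p : ℂ)) (𝓝[≠] (-1/2)) (𝓝[≠] ((-1/2 : ℝ) : ℂ)) := by
      apply tendsto_nhdsWithin_of_tendsto_nhds_of_eventually_within
      · exact (Complex.continuous_ofReal.tendsto _).mono_left nhdsWithin_le_nhds
      · filter_upwards [self_mem_nhdsWithin] with p hp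
        intro h
        exact hp (Complex.ofReal_injective h)
    refine ht.frequently (Eventually.frequently ?_)
    have : Ioo (-1:ℝ) 0 ∈ 𝓝[≠] (-1/2 : ℝ) :=
      nhdsWithin_le_nhds (Ioo_mem_nhds (by norm_num) (by norm_num))
    filter_upwards [this] with p hp
    rw [cL, cR, cD]
    exact base_case hn φ ψ hφ0 hinv hξ hp.1 hp.2
  have := heq (show (q : ℂ) ∈ U by simpa [U] using hq)
  simp only [cL, cR, cD] at this
  exact this

lemma fubini_sphere {n : ℕ} (hn : 1 ≤ n) (ψ : SchwartzMap (EuclideanSpace ℝ (Fin n)) ℂ)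
    {q : ℝ} (hq : -1 < q) (ν : Measure (EuclideanSpace ℝ (Fin n))) [IsFiniteMeasure ν]
    (hν : ∀ᵐ ξ ∂ν, ‖ξ‖ = 1) :
    Integrable (fun x => ((∫ ξ, |⟪x, ξ⟫| ^ q ∂ν : ℝ) : ℂ) * ψ x) ∧
    ∫ x, ((∫ ξ, |⟪x, ξ⟫| ^ q ∂ν : ℝ) : ℂ) * ψ x =
      ∫ ξ, (∫ x, ((|⟪x, ξ⟫| ^ q : ℝ) : ℂ) * ψ x) ∂ν := by
  obtain ⟨K, hK⟩ := integrable_psi hn hq ψ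
  have hψ := ψ.continuous.measurable
  have hm : Measurable (Function.uncurry fun (x ξ : EuclideanSpace ℝ (Fin n)) =>
      ((|⟪x, ξ⟫| ^ q : ℝ) : ℂ) * ψ x) := by
    simp only [Function.uncurry_def]
    fun_prop
  have hprodInt : Integrable (Function.uncurry fun (x ξ : EuclideanSpace ℝ (Fin n)) =>
      ((|⟪x, ξ⟫| ^ q : ℝ) : ℂ) * ψ x) (volume.prod ν) := by
    rw [integrable_prod_iff' hm.aestronglyMeasurable]
    constructor
    · filter_upwards [hν] with ξ hξ using (hK ξ hξ).1
    · refine (integrable_const K).mono' ?_ ?_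
      · exact (hm.norm.stronglyMeasurable.integral_prod_left' (μ := volume)).aestronglyMeasurable
      · filter_upwards [hν] with ξ hξ
        rw [Real.norm_of_nonneg (by positivity)]
        exact (hK ξ hξ).2
  have e : ∀ x, ((∫ ξ, |⟪x, ξ⟫| ^ q ∂ν : ℝ) : ℂ) * ψ x = ∫ ξ, ((|⟪x, ξ⟫| ^ q : ℝ) : ℂ) * ψ x ∂ν := by
    intro x
    rw [integral_mul_const, integral_complex_ofReal]
  simp_rw [e]
  exact ⟨hprodInt.integral_prod_left, integral_integral_swap hprodInt⟩

end KoldProof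

/-- for `q > -1` not an even integer and a finite symmetric Borel signed
measure `μ` on the unit sphere `Ω`, the tempered-distribution Fourier transform of
`G(x) = ∫_Ω |(x,ξ)|^q dμ(ξ)` satisfies, for every even Schwartz `φ` supported away from `0`,
`(Ĝ, φ) = (2π)^{n-1} C_q ∫_Ω (∫_ℝ |t|^{-1-q} φ(tξ) dt) dμ(ξ)`;
here `(Ĝ, φ) = ∫ G(x) φ̂(x) dx`. -/
theorem statement2 (n : ℕ) (hn : 1 ≤ n) (q : ℝ) (hq : -1 < q)
    (hqne : ∀ m : ℤ, q ≠ 2 * (m : ℝ))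
    (μ : SignedMeasure (EuclideanSpace ℝ (Fin n)))
    (hμs : μ.totalVariation (sphere (0 : EuclideanSpace ℝ (Fin n)) 1)ᶜ = 0)
    (hμsym : ∀ A : Set (EuclideanSpace ℝ (Fin n)), MeasurableSet A → μ A = μ (Neg.neg ⁻¹' A))
    (φ : SchwartzMap (EuclideanSpace ℝ (Fin n)) ℂ)
    (hφe : ∀ x, φ (-x) = φ x)
    (hφ0 : (0 : EuclideanSpace ℝ (Fin n)) ∉ tsupport ⇑φ) :
    ∫ x, ((sInt μ fun ξ => |⟪x, ξ⟫| ^ q : ℝ) : ℂ) * ftNU ⇑φ x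
      = (((2 * π) ^ (n - 1) * Cq q : ℝ) : ℂ)
          * csInt μ (fun ξ => ∫ t : ℝ, ((|t| ^ (-1 - q) : ℝ) : ℂ) * φ (t • ξ)) := by
  obtain ⟨ψ, hψ, hinv⟩ := KoldProof.exists_psi φ
  have hz : μ.toJordanDecomposition.posPart (sphere (0 : EuclideanSpace ℝ (Fin n)) 1)ᶜ = 0 ∧
      μ.toJordanDecomposition.negPart (sphere (0 : EuclideanSpace ℝ (Fin n)) 1)ᶜ = 0 := by
    rw [SignedMeasure.totalVariation, Measure.add_apply, add_eq_zero] at hμs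
    exact hμs
  have hp : ∀ᵐ ξ ∂μ.toJordanDecomposition.posPart, ‖ξ‖ = 1 := by
    have := measure_eq_zero_iff_ae_notMem.1 hz.1
    filter_upwards [this] with ξ hξ
    simpa using hξ
  have hm : ∀ᵐ ξ ∂μ.toJordanDecomposition.negPart, ‖ξ‖ = 1 := by
    have := measure_eq_zero_iff_ae_notMem.1 hz.2
    filter_upwards [this] with ξ hξ
    simpa using hξ
  obtain ⟨ip, ep⟩ := KoldProof.fubini_sphere hn ψ hq _ hp
  obtain ⟨im, em⟩ := KoldProof.fubini_sphere hn ψ hq _ hm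
  simp only [sInt, csInt, ← hψ, Complex.ofReal_sub, sub_mul]
  rw [integral_sub ip im, ep, em, mul_sub, ← integral_const_mul, ← integral_const_mul]
  congr 1
  · apply integral_congr_ae
    filter_upwards [hp] with ξ hξ using KoldProof.general_case hn φ ψ hφ0 hinv hξ hq
  · apply integral_congr_ae
    filter_upwards [hm] with ξ hξ using KoldProof.general_case hn φ ψ hφ0 hinv hξ hq

end
end

section
/- Let n > 1 and let q > 0 be a real number that is not an even integer. If μ and ν are finite symmetric Borel signed measures on the unit sphere Ω of ℝⁿ such that ∫_Ω |(x,ξ)|^q dμ(ξ) = ∫_Ω |(x,ξ)|^q dν(ξ) for every x ∈ Ω, then μ = ν. -/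
open MeasureTheory Metric
open scoped Real RealInnerProductSpace

noncomputable section

open ProbabilityTheory Filter Topology
open scoped NNReal ENNReal

/-- standard gaussian on the line -/
abbrev gR : Measure ℝ := gaussianReal 0 1

/-- weighted moment generating function -/
def Hk (q : ℝ) (k : ℕ) (t : ℝ) : ℝ := ∫ u, |u| ^ q * (u ^ k * Real.exp (t * u)) ∂gR

lemma Hk_integrable {q : ℝ} (hq : 0 < q) (k : ℕ) (t : ℝ) :
    Integrable (fun u : ℝ => |u| ^ q * (u ^ k * Real.exp (t * u))) gR := by
  have h := integrable_rpow_abs_mul_exp_of_integrable_exp_mul (μ := gR) (X := fun u : ℝ => u)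
    (t := 1) (v := t) one_ne_zero (integrable_exp_mul_gaussianReal _)
    (integrable_exp_mul_gaussianReal _) (p := q + k) (by positivity)
  refine h.mono' (by fun_prop) (ae_of_all _ fun u => ?_)
  rw [norm_mul, norm_mul, norm_pow, Real.norm_eq_abs, Real.norm_eq_abs, Real.norm_eq_abs,
    Real.abs_exp, abs_of_nonneg (by positivity : 0 ≤ |u| ^ q),
    Real.rpow_add_of_nonneg (abs_nonneg u) hq.le (by positivity), Real.rpow_natCast, mul_assoc]

/-- weighted gaussian -/
def kap (q : ℝ) : Measure ℝ := gR.withDensity (fun u => ((Real.nnabs u ^ q : ℝ≥0) : ℝ≥0∞))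

lemma kap_meas (q : ℝ) : Measurable (fun u : ℝ => (Real.nnabs u ^ q : ℝ≥0)) := by
  have : Measurable fun u : ℝ => Real.nnabs u := by
    exact measurable_nnnorm (α := ℝ)
  fun_prop

lemma Hk_eq (q : ℝ) (k : ℕ) (t : ℝ) :
    Hk q k t = ∫ u, u ^ k * Real.exp (t * u) ∂(kap q) := by
  unfold Hk kap
  rw [integral_withDensity_eq_integral_smul (kap_meas q)]
  simp [NNReal.smul_def]

lemma kap_exp {q : ℝ} (hq : 0 < q) (t : ℝ) : Integrable (fun u => Real.exp (t * u)) (kap q) := by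
  unfold kap
  rw [integrable_withDensity_iff_integrable_smul (kap_meas q)]
  simpa [NNReal.smul_def] using Hk_integrable hq 0 t

lemma Hk_deriv {q : ℝ} (hq : 0 < q) (k : ℕ) (t : ℝ) :
    HasDerivAt (Hk q k) (Hk q (k+1) t) t := by
  have hs : integrableExpSet (fun u : ℝ => u) (kap q) = Set.univ := by
    ext s; simpa [integrableExpSet] using kap_exp hq s
  have := hasDerivAt_integral_pow_mul_exp_real (X := fun u : ℝ => u) (μ := kap q) (t := t)
    (by simp [hs]) k
  rw [Hk_eq, show Hk q k = _ from funext (Hk_eq q k)]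
  exact this

lemma hasDerivAt_abs_rpow_mul {q : ℝ} (hq : 0 < q) (u : ℝ) :
    HasDerivAt (fun u : ℝ => |u| ^ q * u) ((q + 1) * |u| ^ q) u := by
  rcases lt_trichotomy u 0 with h | h | h
  · have h1 : HasDerivAt (fun u : ℝ => (-u) ^ q * u)
        (((-1) * q * (-u) ^ (q - 1)) * u + (-u) ^ q * 1) u :=
      ((hasDerivAt_neg u).rpow_const (Or.inl (by simpa using h.ne))).mul (hasDerivAt_id u)
    have h2 : HasDerivAt (fun u : ℝ => |u| ^ q * u) _ u := h1.congr_of_eventuallyEq (by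
      filter_upwards [Iio_mem_nhds h] with v hv
      rw [abs_of_neg hv])
    convert h2 using 1
    have : (-u) ^ q = (-u) ^ (q - 1) * (-u) := by
      rw [Real.rpow_sub_one (by simpa using h.ne)]
      have : -u ≠ 0 := by simpa using h.ne
      rw [div_mul_cancel₀ _ this]
    rw [abs_of_neg h, this]; ring
  · subst h
    rw [hasDerivAt_iff_tendsto_slope]
    have : Tendsto (fun v : ℝ => |v| ^ q) (𝓝[≠] 0) (𝓝 0) := by
      have : ContinuousAt (fun v : ℝ => |v| ^ q) 0 :=
        (continuous_abs.continuousAt).rpow_const (Or.inr hq.le)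
      have h := this.tendsto
      simp only [abs_zero, Real.zero_rpow hq.ne'] at h
      exact h.mono_left nhdsWithin_le_nhds
    simp only [abs_zero, Real.zero_rpow hq.ne', mul_zero]
    refine this.congr' ?_
    filter_upwards [self_mem_nhdsWithin] with v hv
    have : v ≠ 0 := hv
    simp [slope_def_field, this]
  · have h1 : HasDerivAt (fun u : ℝ => u ^ q * u)
        ((1 * q * u ^ (q - 1)) * u + u ^ q * 1) u :=
      ((hasDerivAt_id u).rpow_const (Or.inl h.ne')).mul (hasDerivAt_id u)
    have h2 : HasDerivAt (fun u : ℝ => |u| ^ q * u) _ u := h1.congr_of_eventuallyEq (by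
      filter_upwards [Ioi_mem_nhds h] with v hv
      rw [abs_of_pos hv])
    convert h2 using 1
    have : u ^ q = u ^ (q - 1) * u := by
      rw [Real.rpow_sub_one h.ne']; field_simp
    rw [abs_of_pos h, this]; ring

lemma pdf_eq (t u : ℝ) : gaussianPDFReal t 1 u = (√(2 * π))⁻¹ * Real.exp (-(u - t)^2 / 2) := by
  simp [gaussianPDFReal]

lemma Hk_eq_vol (q : ℝ) (k : ℕ) (t : ℝ) :
    Hk q k t = ∫ u, gaussianPDFReal 0 1 u * (|u| ^ q * (u ^ k * Real.exp (t * u))) := by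
  unfold Hk
  rw [integral_gaussianReal_eq_integral_smul one_ne_zero]
  rfl

lemma Hk_integrable_vol {q : ℝ} (hq : 0 < q) (k : ℕ) (t : ℝ) :
    Integrable (fun u : ℝ => gaussianPDFReal 0 1 u * (|u| ^ q * (u ^ k * Real.exp (t * u)))) := by
  have := Hk_integrable hq k t
  unfold gR at this
  rw [gaussianReal_of_var_ne_zero _ one_ne_zero, 
    integrable_withDensity_iff_integrable_smul₀' (by fun_prop) (by simp [gaussianPDF])] at this
  simpa [gaussianPDF, gaussianPDFReal_nonneg] using this

lemma Hk_rec {q : ℝ} (hq : 0 < q) (t : ℝ) :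
    Hk q 2 t = (q + 1) * Hk q 0 t + t * Hk q 1 t := by
  have i0 := Hk_integrable_vol hq 0 t
  have i1 := Hk_integrable_vol hq 1 t
  have i2 := Hk_integrable_vol hq 2 t
  have h := integral_eq_zero_of_hasDerivAt_of_integrable
    (f := fun u : ℝ => gaussianPDFReal 0 1 u * (|u| ^ q * (u ^ 1 * Real.exp (t * u))))
    (f' := fun u : ℝ => (q + 1) * (gaussianPDFReal 0 1 u * (|u| ^ q * (u ^ 0 * Real.exp (t * u))))
      + t * (gaussianPDFReal 0 1 u * (|u| ^ q * (u ^ 1 * Real.exp (t * u))))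
      - gaussianPDFReal 0 1 u * (|u| ^ q * (u ^ 2 * Real.exp (t * u))))
    (fun u => ?_) (((i0.const_mul _).add (i1.const_mul _)).sub i2) i1
  · rw [integral_sub (by exact (i0.const_mul _).add (i1.const_mul _)) i2,
      integral_add (i0.const_mul _) (i1.const_mul _), integral_const_mul, integral_const_mul,
      ← Hk_eq_vol, ← Hk_eq_vol, ← Hk_eq_vol] at h
    linarith
  · simp only [pdf_eq]
    have d1 : HasDerivAt (fun u : ℝ => (√(2 * π))⁻¹ * Real.exp (-(u - 0)^2 / 2))
        ((√(2 * π))⁻¹ * (Real.exp (-(u - 0)^2 / 2) * (- u))) u := by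
      refine (HasDerivAt.exp ?_).const_mul _
      have := ((hasDerivAt_id' u).sub_const 0).fun_pow 2 |>.fun_neg |>.div_const 2
      exact this.congr_deriv (by push_cast; ring)
    have d2 : HasDerivAt (fun u : ℝ => Real.exp (t * u)) (Real.exp (t * u) * (t * 1)) u :=
      ((hasDerivAt_id u).const_mul t).exp
    have d3 := d1.fun_mul ((hasDerivAt_abs_rpow_mul hq u).fun_mul d2)
    simp only [mul_assoc, pow_one] at d3 ⊢
    exact d3.congr_deriv (by ring)

/-- smoothed kernel -/
def GG (q t : ℝ) : ℝ := Real.exp (-t^2/2) * Hk q 0 t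

lemma GG_eq (q t : ℝ) : GG q t = ∫ u, |u + t| ^ q ∂gR := by
  have h : ∫ u, |u + t| ^ q ∂gR = ∫ u, |u| ^ q ∂(gaussianReal t 1) := by
    have := gaussianReal_map_add_const (μ := 0) (v := 1) t
    rw [zero_add] at this
    rw [← this, integral_map (by fun_prop)]
    exact (by fun_prop : Measurable fun u : ℝ => |u| ^ q).aestronglyMeasurable
  rw [h, integral_gaussianReal_eq_integral_smul one_ne_zero, GG, Hk_eq_vol, ← integral_const_mul]
  congr 1; ext u
  simp only [pdf_eq, smul_eq_mul, pow_zero, one_mul]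
  have : Real.exp (-(u - t)^2 / 2)
      = Real.exp (-t^2/2) * Real.exp (-(u - 0)^2 / 2) * Real.exp (t * u) := by
    rw [← Real.exp_add, ← Real.exp_add]; congr 1; ring
  rw [this]; ring

/-- derivatives of the smoothed kernel -/
def Gm (q : ℝ) : ℕ → ℝ → ℝ
  | 0 => GG q
  | 1 => fun t => Real.exp (-t^2/2) * (Hk q 1 t - t * Hk q 0 t)
  | (m+2) => fun t => (q - m) * Gm q m t - t * Gm q (m+1) t

lemma Gm_deriv {q : ℝ} (hq : 0 < q) (m : ℕ) (t : ℝ) : HasDerivAt (Gm q m) (Gm q (m+1) t) t := by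
  have de : HasDerivAt (fun t : ℝ => Real.exp (-t^2/2)) (Real.exp (-t^2/2) * (-t)) t := by
    refine HasDerivAt.exp ?_
    have := ((hasDerivAt_id' t)).fun_pow 2 |>.fun_neg |>.div_const 2
    exact this.congr_deriv (by push_cast; ring)
  induction m using Nat.twoStepInduction with
  | zero =>
    have := de.mul (Hk_deriv hq 0 t)
    exact this.congr_deriv (by simp only [Gm]; ring)
  | one =>
    have := de.mul ((Hk_deriv hq 1 t).sub ((hasDerivAt_id t).mul (Hk_deriv hq 0 t)))
    refine HasDerivAt.congr_deriv (f := Gm q 1) this ?_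
    simp only [Gm, GG, Hk_rec hq t, id, Nat.reduceAdd, Nat.cast_zero, Pi.mul_apply, Pi.sub_apply]
    ring
  | more m h1 h2 =>
    have := (h1.const_mul (q - m)).sub ((hasDerivAt_id t).mul h2)
    refine HasDerivAt.congr_deriv (f := Gm q (m + 2)) this ?_
    simp only [Gm, id]; push_cast; ring

lemma Gm_zero_ne {q : ℝ} (hq : 0 < q) (hqne : ∀ m : ℤ, q ≠ 2 * (m : ℝ)) (k : ℕ) :
    Gm q (2 * k) 0 ≠ 0 := by
  induction k with
  | zero =>
    have h : 0 < Hk q 0 0 := by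
      unfold Hk
      rw [integral_pos_iff_support_of_nonneg (fun u => by positivity) (Hk_integrable hq 0 0)]
      have : (Function.support fun u : ℝ => |u| ^ q * (u ^ 0 * Real.exp (0 * u))) = {0}ᶜ := by
        ext u
        simp [Real.rpow_eq_zero_iff_of_nonneg (abs_nonneg u), hq.ne']
      rw [this]
      have : NullSingletonClass gR := nullSingletonClass_gaussianReal one_ne_zero
      rw [prob_compl_eq_one_sub (MeasurableSet.singleton 0), measure_singleton]
      simp
    simp [Gm, GG, h.ne']
  | succ k ih =>
    rw [show 2 * (k + 1) = 2 * k + 2 by ring]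
    simp only [Gm, zero_mul, sub_zero]
    refine mul_ne_zero ?_ ih
    have := hqne k
    push_cast at this ⊢
    exact sub_ne_zero.2 this

section core
variable {n : ℕ}

local notation "EE" => EuclideanSpace ℝ (Fin n)

lemma int_cont {F : Type*} [NormedAddCommGroup F] [SecondCountableTopology F]
    (P : Measure EE) [IsFiniteMeasure P]
    (hP : ∀ᵐ ξ ∂P, ξ ∈ sphere (0 : EE) 1) {f : EE → F} (hf : Continuous f) : Integrable f P := by
  obtain ⟨C, hC⟩ := (isCompact_sphere (0 : EE) 1).exists_bound_of_continuousOn hf.continuousOn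
  refine Integrable.of_bound (by
    borelize F
    exact hf.measurable.aestronglyMeasurable) C ?_
  filter_upwards [hP] with ξ hξ using hC ξ hξ

lemma Gm_cont {q : ℝ} (hq : 0 < q) (m : ℕ) : Continuous (Gm q m) :=
  continuous_iff_continuousAt.2 fun t => (Gm_deriv hq m t).continuousAt

lemma kernel_cont {q : ℝ} (hq : 0 < q) (x : EE) : Continuous (fun ξ : EE => |⟪x, ξ⟫| ^ q) :=
  (by fun_prop : Continuous fun ξ : EE => |⟪x, ξ⟫|).rpow_const (fun _ => Or.inr hq.le)

lemma hom {q : ℝ} (hq : 0 < q) (P N : Measure EE)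
    (h : ∀ x ∈ sphere (0 : EE) 1, ∫ ξ, |⟪x, ξ⟫| ^ q ∂P = ∫ ξ, |⟪x, ξ⟫| ^ q ∂N) (x : EE) :
    ∫ ξ, |⟪x, ξ⟫| ^ q ∂P = ∫ ξ, |⟪x, ξ⟫| ^ q ∂N := by
  by_cases hx : x = 0
  · simp [hx, Real.zero_rpow hq.ne']
  have hx' : ‖x‖ ≠ 0 := by simpa using hx
  have h1 := h (‖x‖⁻¹ • x) (by simp [norm_smul, hx'])
  have h2 : ∀ ξ : EE, |⟪x, ξ⟫| ^ q = ‖x‖ ^ q * |⟪‖x‖⁻¹ • x, ξ⟫| ^ q := by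
    intro ξ
    rw [← Real.mul_rpow (norm_nonneg _) (abs_nonneg _), real_inner_smul_left, abs_mul,
      abs_inv, abs_norm, mul_inv_cancel_left₀ hx']
  simp_rw [h2, integral_const_mul, h1]

lemma marginal (ξ : EE) (hξ : ξ ∈ sphere (0 : EE) 1) :
    (stdGaussian EE).map (fun x => ⟪x, ξ⟫) = gR := by
  have h := IsGaussian.map_eq_gaussianReal (μ := stdGaussian EE) (innerSL ℝ ξ)
  rw [integral_strongDual_stdGaussian, variance_dual_stdGaussian] at h
  have h1 : ‖ξ‖ = 1 := by simpa using hξ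
  simp only [innerSL_apply_norm, h1, one_pow, Real.toNNReal_one] at h
  refine Eq.trans ?_ h
  congr 1
  ext x
  simp [real_inner_comm]

lemma shift_lintegral {q : ℝ} (hq : 0 < q) (P : Measure EE) [IsFiniteMeasure P]
    (hP : ∀ᵐ ξ ∂P, ξ ∈ sphere (0 : EE) 1) (a : EE) :
    ENNReal.ofReal (∫ ξ, GG q ⟪a, ξ⟫ ∂P)
      = ∫⁻ x, ENNReal.ofReal (∫ ξ, |⟪x + a, ξ⟫| ^ q ∂P) ∂(stdGaussian EE) := by
  have hnn : ∀ t, 0 ≤ GG q t := fun t => by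
    rw [GG_eq]; exact integral_nonneg fun u => by positivity
  rw [ofReal_integral_eq_lintegral_ofReal
    (f := fun ξ => GG q ⟪a, ξ⟫) (int_cont P hP ((Gm_cont hq 0).comp (by fun_prop : Continuous fun ξ : EE => ⟪a, ξ⟫)))
    (ae_of_all _ fun ξ => hnn _)]
  have h1 : ∀ x, ENNReal.ofReal (∫ ξ, |⟪x + a, ξ⟫| ^ q ∂P)
      = ∫⁻ ξ, ENNReal.ofReal (|⟪x + a, ξ⟫| ^ q) ∂P := fun x =>
    ofReal_integral_eq_lintegral_ofReal (int_cont P hP (kernel_cont hq (x + a)))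
      (ae_of_all _ fun ξ => by positivity)
  simp_rw [h1]
  rw [lintegral_lintegral_swap (by
    apply Measurable.aemeasurable
    unfold Function.uncurry
    fun_prop)]
  refine lintegral_congr_ae ?_
  filter_upwards [hP] with ξ hξ
  have hI : Integrable (fun u => |u + ⟪a, ξ⟫| ^ q) gR := by
    by_contra hcon
    have h0 := GG_eq q ⟪a, ξ⟫
    rw [integral_undef hcon] at h0
    have : 0 < Hk q 0 ⟪a, ξ⟫ := by
      unfold Hk
      rw [integral_pos_iff_support_of_nonneg (fun u => by positivity) (Hk_integrable hq 0 _)]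
      have : (Function.support fun u : ℝ => |u| ^ q * (u ^ 0 * Real.exp (⟪a, ξ⟫ * u))) = {0}ᶜ := by
        ext u
        simp [Real.rpow_eq_zero_iff_of_nonneg (abs_nonneg u), hq.ne']
      rw [this]
      have : NullSingletonClass gR := nullSingletonClass_gaussianReal one_ne_zero
      rw [prob_compl_eq_one_sub (MeasurableSet.singleton 0), measure_singleton]
      simp
    unfold GG at h0
    have := mul_pos (Real.exp_pos (-⟪a, ξ⟫ ^ 2 / 2)) this
    linarith
  rw [GG_eq, ofReal_integral_eq_lintegral_ofReal hI (ae_of_all _ fun u => by positivity),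
    ← marginal ξ hξ, lintegral_map (by fun_prop) (by fun_prop)]
  simp [inner_add_left]

lemma shift_eq {q : ℝ} (hq : 0 < q) (P N : Measure EE) [IsFiniteMeasure P] [IsFiniteMeasure N]
    (hP : ∀ᵐ ξ ∂P, ξ ∈ sphere (0 : EE) 1) (hN : ∀ᵐ ξ ∂N, ξ ∈ sphere (0 : EE) 1)
    (h : ∀ x ∈ sphere (0 : EE) 1, ∫ ξ, |⟪x, ξ⟫| ^ q ∂P = ∫ ξ, |⟪x, ξ⟫| ^ q ∂N) (a : EE) :
    ∫ ξ, GG q ⟪a, ξ⟫ ∂P = ∫ ξ, GG q ⟪a, ξ⟫ ∂N := by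
  have hnn : ∀ t, 0 ≤ GG q t := fun t => by
    rw [GG_eq]; exact integral_nonneg fun u => by positivity
  have h1 := shift_lintegral hq P hP a
  have h2 := shift_lintegral hq N hN a
  simp_rw [hom hq P N h] at h1
  rw [← h2] at h1
  rwa [ENNReal.ofReal_eq_ofReal_iff (integral_nonneg fun ξ => hnn _)
    (integral_nonneg fun ξ => hnn _)] at h1

lemma deriv_int {q : ℝ} (hq : 0 < q) (P : Measure EE) [IsFiniteMeasure P]
    (hP : ∀ᵐ ξ ∂P, ξ ∈ sphere (0 : EE) 1) (a : EE) (m : ℕ) (s : ℝ) :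
    HasDerivAt (fun s => ∫ ξ, ⟪a, ξ⟫ ^ m * Gm q m (s * ⟪a, ξ⟫) ∂P)
      (∫ ξ, ⟪a, ξ⟫ ^ (m + 1) * Gm q (m + 1) (s * ⟪a, ξ⟫) ∂P) s := by
  have hc : ∀ m, Continuous (fun p : ℝ × EE => ⟪a, p.2⟫ ^ m * Gm q m (p.1 * ⟪a, p.2⟫)) := by
    intro m
    have := Gm_cont hq m
    fun_prop
  have hc' : ∀ m s, Continuous (fun ξ : EE => ⟪a, ξ⟫ ^ m * Gm q m (s * ⟪a, ξ⟫)) :=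
    fun m s => (hc m).comp (by fun_prop : Continuous fun ξ : EE => (s, ξ))
  obtain ⟨C, hC⟩ := ((isCompact_closedBall s 1).prod
    (isCompact_sphere (0 : EE) 1)).exists_bound_of_continuousOn (hc (m + 1)).continuousOn
  refine (hasDerivAt_integral_of_dominated_loc_of_deriv_le (bound := fun _ => C)
    (F := fun s ξ => ⟪a, ξ⟫ ^ m * Gm q m (s * ⟪a, ξ⟫))
    (F' := fun s ξ => ⟪a, ξ⟫ ^ (m + 1) * Gm q (m + 1) (s * ⟪a, ξ⟫))
    (closedBall_mem_nhds s one_pos) ?_ ?_ ?_ ?_ ?_ ?_).2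
  · exact Eventually.of_forall fun s => (int_cont P hP (hc' m s)).1
  · exact int_cont P hP (hc' m s)
  · exact (int_cont P hP (hc' (m + 1) s)).1
  · filter_upwards [hP] with ξ hξ t ht using hC (t, ξ) ⟨ht, hξ⟩
  · exact integrable_const C
  · refine ae_of_all _ fun ξ t _ => ?_
    have h1 : HasDerivAt (fun t : ℝ => t * ⟪a, ξ⟫) ⟪a, ξ⟫ t := by
      simpa using (hasDerivAt_id t).mul_const ⟪a, ξ⟫
    have h2 := ((Gm_deriv hq m (t * ⟪a, ξ⟫)).comp t h1).const_mul (⟪a, ξ⟫ ^ m)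
    exact h2.congr_deriv (by ring)

lemma all_deriv {q : ℝ} (hq : 0 < q) (P N : Measure EE) [IsFiniteMeasure P] [IsFiniteMeasure N]
    (hP : ∀ᵐ ξ ∂P, ξ ∈ sphere (0 : EE) 1) (hN : ∀ᵐ ξ ∂N, ξ ∈ sphere (0 : EE) 1)
    (h : ∀ x ∈ sphere (0 : EE) 1, ∫ ξ, |⟪x, ξ⟫| ^ q ∂P = ∫ ξ, |⟪x, ξ⟫| ^ q ∂N) (a : EE) (m : ℕ) :
    ∀ s : ℝ, ∫ ξ, ⟪a, ξ⟫ ^ m * Gm q m (s * ⟪a, ξ⟫) ∂P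
      = ∫ ξ, ⟪a, ξ⟫ ^ m * Gm q m (s * ⟪a, ξ⟫) ∂N := by
  induction m with
  | zero =>
    intro s
    have := shift_eq hq P N hP hN h (s • a)
    simpa [Gm, real_inner_smul_left] using this
  | succ m ih =>
    intro s
    have h1 := deriv_int hq P hP a m s
    rw [funext ih] at h1
    exact h1.unique (deriv_int hq N hN a m s)

lemma even_moment {q : ℝ} (hq : 0 < q) (hqne : ∀ m : ℤ, q ≠ 2 * (m : ℝ))
    (P N : Measure EE) [IsFiniteMeasure P] [IsFiniteMeasure N]
    (hP : ∀ᵐ ξ ∂P, ξ ∈ sphere (0 : EE) 1) (hN : ∀ᵐ ξ ∂N, ξ ∈ sphere (0 : EE) 1)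
    (h : ∀ x ∈ sphere (0 : EE) 1, ∫ ξ, |⟪x, ξ⟫| ^ q ∂P = ∫ ξ, |⟪x, ξ⟫| ^ q ∂N) (a : EE) (k : ℕ) :
    ∫ ξ, ⟪a, ξ⟫ ^ (2 * k) ∂P = ∫ ξ, ⟪a, ξ⟫ ^ (2 * k) ∂N := by
  have := all_deriv hq P N hP hN h a (2 * k) 0
  simp only [zero_mul, integral_mul_const] at this
  exact mul_right_cancel₀ (Gm_zero_ne hq hqne k) this

/-- symmetrization -/
def symz (P : Measure EE) : Measure EE := P + P.map Neg.neg

instance (P : Measure EE) [IsFiniteMeasure P] : IsFiniteMeasure (symz P) := by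
  unfold symz; infer_instance

lemma symz_sphere (P : Measure EE) (hP : ∀ᵐ ξ ∂P, ξ ∈ sphere (0 : EE) 1) :
    ∀ᵐ ξ ∂(symz P), ξ ∈ sphere (0 : EE) 1 := by
  unfold symz
  rw [ae_add_measure_iff]
  refine ⟨hP, ?_⟩
  rw [ae_map_iff (p := fun ξ => ξ ∈ sphere (0 : EE) 1) (by fun_prop)
    isClosed_sphere.measurableSet]
  filter_upwards [hP] with ξ hξ
  simpa using hξ

lemma symz_int (P : Measure EE) [IsFiniteMeasure P] (hP : ∀ᵐ ξ ∂P, ξ ∈ sphere (0 : EE) 1)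
    {f : EE → ℝ} (hf : Continuous f) :
    ∫ ξ, f ξ ∂(symz P) = ∫ ξ, f ξ ∂P + ∫ ξ, f (-ξ) ∂P := by
  have hi := int_cont _ (symz_sphere P hP) hf
  unfold symz at hi ⊢
  rw [integrable_add_measure] at hi
  rw [integral_add_measure hi.1 hi.2, integral_map (by fun_prop)
    hf.measurable.aestronglyMeasurable]

lemma symz_moment {q : ℝ} (hq : 0 < q) (hqne : ∀ m : ℤ, q ≠ 2 * (m : ℝ))
    (P N : Measure EE) [IsFiniteMeasure P] [IsFiniteMeasure N]
    (hP : ∀ᵐ ξ ∂P, ξ ∈ sphere (0 : EE) 1) (hN : ∀ᵐ ξ ∂N, ξ ∈ sphere (0 : EE) 1)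
    (h : ∀ x ∈ sphere (0 : EE) 1, ∫ ξ, |⟪x, ξ⟫| ^ q ∂P = ∫ ξ, |⟪x, ξ⟫| ^ q ∂N) (a : EE) (k : ℕ) :
    ∫ ξ, ⟪a, ξ⟫ ^ k ∂(symz P) = ∫ ξ, ⟪a, ξ⟫ ^ k ∂(symz N) := by
  rw [symz_int P hP (by fun_prop), symz_int N hN (by fun_prop)]
  rcases Nat.even_or_odd k with hk | hk
  · simp only [inner_neg_right, hk.neg_pow]
    obtain ⟨j, rfl⟩ := hk.two_dvd
    rw [even_moment hq hqne P N hP hN h]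
  · simp only [inner_neg_right, hk.neg_pow, integral_neg]
    ring

lemma charFun_series (P : Measure EE) [IsFiniteMeasure P]
    (hP : ∀ᵐ ξ ∂P, ξ ∈ sphere (0 : EE) 1) (a : EE) :
    charFun P a = ∑' k : ℕ, Complex.I ^ k / (k.factorial : ℂ) * ((∫ ξ, ⟪a, ξ⟫ ^ k ∂P : ℝ) : ℂ) := by
  rw [charFun_apply]
  have hs := hasSum_integral_of_summable_integral_norm (μ := P)
    (F := fun (k : ℕ) (ξ : EE) => Complex.I ^ k / (k.factorial : ℂ) * ((⟪a, ξ⟫ ^ k : ℝ) : ℂ))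
    (fun k => int_cont P hP (by fun_prop)) ?_
  · simp_rw [integral_const_mul, integral_complex_ofReal] at hs
    rw [hs.tsum_eq]
    congr 1; ext ξ
    rw [Complex.exp_eq_exp_ℂ, NormedSpace.exp_eq_tsum_div]
    refine tsum_congr fun k => ?_
    rw [real_inner_comm, mul_pow]; push_cast; ring
  · refine Summable.of_nonneg_of_le (fun k => integral_nonneg fun ξ => norm_nonneg _) (fun k => ?_)
      ((Real.summable_pow_div_factorial ‖a‖).mul_right (P.real Set.univ))
    have : ∫ ξ, ‖a‖ ^ k / (k.factorial : ℝ) ∂P = ‖a‖ ^ k / (k.factorial : ℝ) * P.real Set.univ := by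
      rw [integral_const, smul_eq_mul, mul_comm]
    rw [← this]
    refine integral_mono_ae (int_cont P hP (by fun_prop)) (integrable_const _) ?_
    filter_upwards [hP] with ξ hξ
    have h1 : ‖ξ‖ = 1 := by simpa using hξ
    have h2 : |⟪a, ξ⟫| ≤ ‖a‖ := by simpa [h1] using abs_real_inner_le_norm a ξ
    simp only [norm_mul, norm_div, norm_pow, Complex.norm_I, one_pow, Complex.norm_natCast,
      Complex.norm_real, Real.norm_eq_abs]
    rw [div_mul_eq_mul_div, one_mul]
    gcongr

lemma symz_eq {q : ℝ} (hq : 0 < q) (hqne : ∀ m : ℤ, q ≠ 2 * (m : ℝ))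
    (P N : Measure EE) [IsFiniteMeasure P] [IsFiniteMeasure N]
    (hP : ∀ᵐ ξ ∂P, ξ ∈ sphere (0 : EE) 1) (hN : ∀ᵐ ξ ∂N, ξ ∈ sphere (0 : EE) 1)
    (h : ∀ x ∈ sphere (0 : EE) 1, ∫ ξ, |⟪x, ξ⟫| ^ q ∂P = ∫ ξ, |⟪x, ξ⟫| ^ q ∂N) :
    symz P = symz N := by
  apply Measure.ext_of_charFun
  ext a
  rw [charFun_series _ (symz_sphere P hP), charFun_series _ (symz_sphere N hN)]
  simp_rw [symz_moment hq hqne P N hP hN h a]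

lemma tv_ae (μ : SignedMeasure EE) (hμs : μ.totalVariation (sphere (0 : EE) 1)ᶜ = 0) :
    (∀ᵐ ξ ∂μ.toJordanDecomposition.posPart, ξ ∈ sphere (0 : EE) 1) ∧
    (∀ᵐ ξ ∂μ.toJordanDecomposition.negPart, ξ ∈ sphere (0 : EE) 1) := by
  rw [SignedMeasure.totalVariation, Measure.add_apply, add_eq_zero] at hμs
  exact hμs

end core

/-- uniqueness in the Blaschke–Levy representation: for `n > 1` and `q > 0`
not an even integer, if two finite symmetric Borel signed measures `μ`, `ν` on the unit
sphere `Ω` of `ℝⁿ` satisfy `∫_Ω |(x,ξ)|^q dμ(ξ) = ∫_Ω |(x,ξ)|^q dν(ξ)` for all `x ∈ Ω`,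
then `μ = ν`. -/
theorem statement3 (n : ℕ) (hn : 1 < n) (q : ℝ) (hq : 0 < q)
    (hqne : ∀ m : ℤ, q ≠ 2 * (m : ℝ))
    (μ ν : SignedMeasure (EuclideanSpace ℝ (Fin n)))
    (hμs : μ.totalVariation (sphere (0 : EuclideanSpace ℝ (Fin n)) 1)ᶜ = 0)
    (hνs : ν.totalVariation (sphere (0 : EuclideanSpace ℝ (Fin n)) 1)ᶜ = 0)
    (hμsym : ∀ A : Set (EuclideanSpace ℝ (Fin n)), MeasurableSet A → μ A = μ (Neg.neg ⁻¹' A))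
    (hνsym : ∀ A : Set (EuclideanSpace ℝ (Fin n)), MeasurableSet A → ν A = ν (Neg.neg ⁻¹' A))
    (heq : ∀ x ∈ sphere (0 : EuclideanSpace ℝ (Fin n)) 1,
      sInt μ (fun ξ => |⟪x, ξ⟫| ^ q) = sInt ν (fun ξ => |⟪x, ξ⟫| ^ q)) :
    μ = ν := by
  obtain ⟨hμp, hμn⟩ := tv_ae μ hμs
  obtain ⟨hνp, hνn⟩ := tv_ae ν hνs
  have hP : ∀ᵐ ξ ∂(μ.toJordanDecomposition.posPart + ν.toJordanDecomposition.negPart),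
      ξ ∈ sphere (0 : EuclideanSpace ℝ (Fin n)) 1 := by
    rw [ae_add_measure_iff]; exact ⟨hμp, hνn⟩
  have hN : ∀ᵐ ξ ∂(ν.toJordanDecomposition.posPart + μ.toJordanDecomposition.negPart),
      ξ ∈ sphere (0 : EuclideanSpace ℝ (Fin n)) 1 := by
    rw [ae_add_measure_iff]; exact ⟨hνp, hμn⟩
  have key := symz_eq hq hqne _ _ hP hN (fun x hx => by
    have h := heq x hx
    unfold sInt at h
    have hc := kernel_cont hq x
    rw [integral_add_measure (int_cont _ hμp hc) (int_cont _ hνn hc),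
      integral_add_measure (int_cont _ hνp hc) (int_cont _ hμn hc)]
    linarith)
  ext A hA
  have hA' : MeasurableSet (Neg.neg ⁻¹' A) := measurable_neg hA
  have e := congrArg (fun M : Measure (EuclideanSpace ℝ (Fin n)) => M.real A) key
  simp only [symz] at e
  rw [measureReal_add_apply, measureReal_add_apply, map_measureReal_apply measurable_neg hA,
    measureReal_add_apply,
    measureReal_add_apply, measureReal_add_apply, map_measureReal_apply measurable_neg hA,
    measureReal_add_apply] at e
  have h1 := hμsym A hA
  have h2 := hνsym A hA
  rw [μ.apply_eq_posPart_real_sub_negPart_real hA,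
    μ.apply_eq_posPart_real_sub_negPart_real hA'] at h1
  rw [ν.apply_eq_posPart_real_sub_negPart_real hA,
    ν.apply_eq_posPart_real_sub_negPart_real hA'] at h2
  rw [μ.apply_eq_posPart_real_sub_negPart_real hA, ν.apply_eq_posPart_real_sub_negPart_real hA]
  linarith

end
end
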